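/- There exists a constant c > 0 such that every connected vertex-transitive finite simple graph G on n ≥ 3 vertices contains a cycle of length at least c · n^{13/21}. -/

import Mathlib

open SimpleGraph

/-!
Let `C` be a longest cycle, of length `ℓ`, and let `φ` be an automorphism such that `C` and `φ • C`
share `k` vertices. These vertices cut both cycles into about `k` segments. A family of disjoint
paths from `C` to `φ • C` that avoid `C ∩ φ • C` is a bipartite graph on the segments, in which two
paths with the same pair of segments would lengthen `C` or `φ • C`. With more than `32 * k ^ (8/5)`
paths, counting double stars yields a 4-cycle or a 6-cycle of that graph whose paths lie in a
compatible order; rerouting both cycles along these paths then produces two cycles of total length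
greater than `2 * ℓ`. By Menger's theorem a set of order `k ^ (8/5)` therefore separates `C` from
`φ • C`.

Averaging over the automorphism group provides a `φ` with `k ≤ ℓ ^ 2 / n`. On the other hand, `C`
meets all its translates, and uncrossing a separation with its own translates shows that any
separation of `C` from a translate has order at least `n / (8 * ℓ)`. The two bounds on the order
combine to `n ^ 13 ≤ 2 ^ 53 * ℓ ^ 21`.
-/

namespace LongCycle

section Menger

variable {V : Type*} {E E' : Set (V × V)} {A B X Y S T I : Finset V} {l l₁ l₂ : List V} {v x y : V}

/-- `l` lists the vertices of a walk from `A` to `B` in the digraph with arc set `E`. -/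
structure IsConnector (E : Set (V × V)) (A B : Finset V) (l : List V) : Prop where
  isChain : l.IsChain fun a b => (a, b) ∈ E
  head_mem : ∃ a ∈ A, l.head? = some a
  getLast_mem : ∃ b ∈ B, l.getLast? = some b

/-- `S` meets every walk from `A` to `B` in the digraph with arc set `E`. The set `S` may meet `A`
and `B`. -/
def Separates (E : Set (V × V)) (A B S : Finset V) : Prop :=
  ∀ ⦃l⦄, IsConnector E A B l → ∃ v ∈ l, v ∈ S

/-- `P` is a family of pairwise disjoint walks from `A` to `B`. Only the size of the index set `I`
matters; taking it inside `V` is a convenience. -/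
structure IsLinkage (E : Set (V × V)) (A B I : Finset V) (P : V → List V) : Prop where
  isConnector : ∀ i ∈ I, IsConnector E A B (P i)
  disjoint : (I : Set V).Pairwise fun i j => List.Disjoint (P i) (P j)

/-- The walks `P x ++ [x]`, for `x ∈ X`, form a linkage from `A` onto `X`, and each of them meets
`X` in its last vertex only. -/
structure IsFan (E : Set (V × V)) (A X : Finset V) (P : V → List V) : Prop
    extends IsLinkage E A X X fun x => P x ++ [x] where
  avoids : ∀ x ∈ X, ∀ w ∈ P x, w ∉ X

theorem exists_eq_append_cons_of_mem (h : ∃ v ∈ l, v ∈ X) :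
    ∃ l₁ v l₂, l = l₁ ++ v :: l₂ ∧ v ∈ X ∧ ∀ w ∈ l₁, w ∉ X := by
  classical
  obtain ⟨v, hv⟩ := Option.isSome_iff_exists.1
    (List.find?_isSome (p := fun v => decide (v ∈ X)).2 (by simpa using h))
  obtain ⟨hvX, l₁, l₂, rfl, hl₁⟩ := List.find?_eq_some_iff_append.1 hv
  exact ⟨l₁, v, l₂, rfl, by simpa using hvX, by simpa using hl₁⟩

namespace IsConnector

theorem exists_eq_append_singleton (h : IsConnector E A B l) : ∃ l₁, ∃ v ∈ B, l = l₁ ++ [v] := by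
  obtain ⟨b, hb, hl⟩ := h.getLast_mem
  obtain ⟨l₁, rfl⟩ := List.getLast?_eq_some_iff.1 hl
  exact ⟨l₁, b, hb, rfl⟩

theorem mono (hE : E ⊆ E') (h : IsConnector E A B l) : IsConnector E' A B l :=
  ⟨h.isChain.imp fun _ _ hab => hE hab, h.head_mem, h.getLast_mem⟩

theorem reverse (h : IsConnector E A B l) : IsConnector (Prod.swap ⁻¹' E) B A l.reverse :=
  ⟨List.isChain_reverse.2 h.isChain, by simpa using h.getLast_mem, by simpa using h.head_mem⟩

theorem takeUntil (h : IsConnector E A B (l₁ ++ v :: l₂)) (hv : v ∈ X) :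
    IsConnector E A X (l₁ ++ [v]) where
  isChain := (List.isChain_split.1 h.isChain).1
  head_mem := by simpa [List.head?_append] using h.head_mem
  getLast_mem := ⟨v, hv, by simp⟩

theorem append (h₁ : IsConnector E A X (l₁ ++ [v])) (h₂ : IsConnector E Y B (v :: l₂)) :
    IsConnector E A B (l₁ ++ v :: l₂) where
  isChain := List.isChain_split.2 ⟨h₁.isChain, h₂.isChain⟩
  head_mem := by simpa [List.head?_append] using h₁.head_mem
  getLast_mem := by simpa using h₂.getLast_mem

theorem cons (h : IsConnector E Y B (y :: l)) (hxy : (x, y) ∈ E) (hx : x ∈ X) :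
    IsConnector E X B (x :: y :: l) where
  isChain := List.isChain_cons_cons.2 ⟨hxy, h.isChain⟩
  head_mem := ⟨x, hx, rfl⟩
  getLast_mem := by simpa using h.getLast_mem

theorem of_insert_arc (h : IsConnector (insert (x, y) E) A B (l ++ [v])) (hx : x ∉ l) :
    IsConnector E A B (l ++ [v]) := by
  refine ⟨List.isChain_iff_getElem.2 fun i hi => ?_, h.head_mem, h.getLast_mem⟩
  refine (List.isChain_iff_getElem.1 h.isChain i hi).resolve_left fun hxy => hx ?_
  have hil : i < l.length := by simpa using hi
  rw [← (Prod.mk.inj hxy).1, List.getElem_append_left hil]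
  exact List.getElem_mem hil

end IsConnector

namespace Separates

theorem swap (h : Separates E A B S) : Separates (Prod.swap ⁻¹' E) B A S := fun l hl => by
  simpa using h hl.reverse

theorem insert_arc [DecidableEq V] (h : Separates E A B S) :
    Separates (insert (x, y) E) A B (insert x S) := by
  intro l hl
  obtain ⟨l₁, v, -, rfl⟩ := hl.exists_eq_append_singleton
  by_cases hx : x ∈ l₁
  · exact ⟨x, by simp [hx], by simp⟩
  · obtain ⟨w, hw, hwS⟩ := h (hl.of_insert_arc hx)
    exact ⟨w, hw, by simp [hwS]⟩

theorem of_insert_arc (hX : Separates (insert (x, y) E) A B X) (hx : x ∈ X)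
    (hT : Separates E A X T) : Separates (insert (x, y) E) A B T := by
  intro l hl
  obtain ⟨l₁, v, l₂, rfl, hv, hl₁⟩ := exists_eq_append_cons_of_mem (hX hl)
  obtain ⟨w, hw, hwT⟩ := hT ((hl.takeUntil hv).of_insert_arc fun h => hl₁ x h hx)
  exact ⟨w, by grind, hwT⟩

end Separates

namespace IsLinkage

variable {P : V → List V}

theorem mono (hE : E ⊆ E') (h : IsLinkage E A B I P) : IsLinkage E' A B I P :=
  ⟨fun i hi => (h.isConnector i hi).mono hE, h.disjoint⟩

theorem reverse (h : IsLinkage E A B I P) :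
    IsLinkage (Prod.swap ⁻¹' E) B A I fun i => (P i).reverse :=
  ⟨fun i hi => (h.isConnector i hi).reverse, fun i hi j hj hij => by
    simpa using h.disjoint hi hj hij⟩

theorem exists_isFan (h : IsLinkage E A X I P) (hXI : X.card ≤ I.card) :
    ∃ Q, IsFan E A X Q := by
  have hit : ∀ i ∈ I, ∃ x ∈ X, ∃ l, IsConnector E A X (l ++ [x]) ∧ (∀ w ∈ l, w ∉ X) ∧
      ∀ w ∈ l ++ [x], w ∈ P i := by
    intro i hi
    obtain ⟨l, v, hv, hl⟩ := (h.isConnector i hi).exists_eq_append_singleton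
    obtain ⟨l₁, x, l₂, hPi, hx, hl₁⟩ :=
      exists_eq_append_cons_of_mem (X := X) (l := P i) ⟨v, by simp [hl], hv⟩
    exact ⟨x, hx, l₁, (hPi ▸ h.isConnector i hi).takeUntil hx, hl₁, by grind⟩
  choose! e heX Q hQ hQX hQP using hit
  have hmem : ∀ i ∈ I, e i ∈ P i := fun i hi => hQP i hi _ (by simp)
  have hinj : Set.InjOn e I := fun i hi j hj hij => by
    by_contra hne
    exact h.disjoint hi hj hne (hmem i hi) (hij ▸ hmem j hj)
  have hsurj := Finset.surjOn_of_injOn_of_card_le e heX hinj hXI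
  choose! r hrI hr using fun x (hx : x ∈ X) => hsurj hx
  refine ⟨fun x => Q (r x), ⟨fun x hx => ?_, fun x hx x' hx' hne w hw hw' => ?_⟩,
    fun x hx => hQX _ (hrI x hx)⟩
  · simpa only [hr x hx] using hQ _ (hrI x hx)
  · refine h.disjoint (hrI x hx) (hrI x' hx') (fun hrr => hne ?_) (hQP _ (hrI x hx) w ?_)
      (hQP _ (hrI x' hx') w ?_)
    · rw [← hr x hx, ← hr x' hx', hrr]
    · rwa [hr x hx]
    · rwa [hr x' hx']

end IsLinkage

namespace IsFan

variable {P Q : V → List V} {a b : V}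

theorem exists_isConnector (h : IsFan E A X P) (ha : a ∈ X) (hv : v ∈ P a ++ [a]) :
    ∃ l, IsConnector E A {v} (l ++ [v]) ∧ ∀ w ∈ l, w ∉ X := by
  obtain ⟨l₁, l₂, hl⟩ := List.append_of_mem hv
  refine ⟨l₁, (hl ▸ h.isConnector a ha).takeUntil (by simp), fun w hw => h.avoids a ha w ?_⟩
  have hdrop := congrArg List.dropLast hl
  rw [List.dropLast_concat, List.dropLast_append_of_ne_nil (by simp)] at hdrop
  exact hdrop ▸ List.mem_append_left _ hw

variable [DecidableEq V]

theorem eq_of_mem_of_mem (hS : Separates E A B S) (hP : IsFan E A (insert x S) P)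
    (hQ : IsFan (Prod.swap ⁻¹' E) B (insert y S) Q) (ha : a ∈ insert x S) (hb : b ∈ insert y S)
    (hva : v ∈ P a ++ [a]) (hvb : v ∈ Q b ++ [b]) : v ∈ S ∧ v = a ∧ v = b := by
  have hvS : v ∈ S := by
    obtain ⟨l₁, h₁, hl₁⟩ := hP.exists_isConnector ha hva
    obtain ⟨l₂, h₂, hl₂⟩ := hQ.exists_isConnector hb hvb
    have h₂' := h₂.reverse
    rw [List.reverse_append, List.reverse_singleton, List.singleton_append] at h₂'
    obtain ⟨w, hw, hwS⟩ := hS (h₁.append h₂')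
    grind
  have hPa := hP.avoids a ha v
  have hQb := hQ.avoids b hb v
  grind

/-- The walk of `P` ending at `a ∈ S` continues with the reversed walk of `Q` from `a`; the one
ending at `x` continues along the new arc `(x, y)`. -/
theorem exists_isLinkage_insert_arc (hS : Separates E A B S) (hP : IsFan E A (insert x S) P)
    (hQ : IsFan (Prod.swap ⁻¹' E) B (insert y S) Q) (hy : y ∉ S) :
    ∃ R, IsLinkage (insert (x, y) E) A B (insert x S) R := by
  have hPE : ∀ a ∈ insert x S, IsConnector (insert (x, y) E) A (insert x S) (P a ++ [a]) :=
    fun a ha => (hP.isConnector a ha).mono (Set.subset_insert _ _)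
  have hQE : ∀ b ∈ insert y S,
      IsConnector (insert (x, y) E) (insert y S) B (b :: (Q b).reverse) := fun b hb => by
    simpa using (hQ.isConnector b hb).reverse.mono (E' := insert (x, y) E) (Set.subset_insert _ _)
  let next : V → V := fun a => if a = x then y else a
  let R : V → List V := fun a => P a ++ a :: if a = x then y :: (Q y).reverse else (Q a).reverse
  have next_mem : ∀ a ∈ insert x S, next a ∈ insert y S := by grind
  have mem_R : ∀ a w, w ∈ R a → w ∈ P a ++ [a] ∨ w ∈ Q (next a) ++ [next a] := by
    intro a w hw
    by_cases hax : a = x <;> simp only [R, next, hax, if_true, if_false] at hw ⊢ <;> grind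
  have cross : ∀ a ∈ insert x S, ∀ b ∈ insert x S, a ≠ b →
      ∀ w, w ∈ P a ++ [a] → w ∉ Q (next b) ++ [next b] := by
    intro a ha b hb hab w hwa hwb
    obtain ⟨hwS, rfl, hwb⟩ := eq_of_mem_of_mem hS hP hQ ha (next_mem b hb) hwa hwb
    grind
  refine ⟨R, fun a ha => (hPE a ha).append (Y := insert x S) ?_, fun a ha b hb hab w hwa hwb => ?_⟩
  · by_cases hax : a = x
    · simpa only [hax, if_true] using
        (hQE y (Finset.mem_insert_self _ _)).cons (Set.mem_insert _ _) (Finset.mem_insert_self _ _)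
    · have hQa := hQE a (by grind)
      simpa only [hax, if_false] using ⟨hQa.isChain, ⟨a, ha, rfl⟩, hQa.getLast_mem⟩
  · rcases mem_R a w hwa with hwa | hwa <;> rcases mem_R b w hwb with hwb | hwb
    · exact hP.disjoint ha hb hab hwa hwb
    · exact cross a ha b hb hab w hwa hwb
    · exact cross b hb a ha hab.symm w hwb hwa
    · exact hQ.disjoint (next_mem a ha) (next_mem b hb) (by grind) hwa hwb

end IsFan

theorem preimage_swap_insert (E : Set (V × V)) (x y : V) :
    Prod.swap ⁻¹' insert (x, y) E = insert (y, x) (Prod.swap ⁻¹' E) := by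
  ext ⟨a, b⟩
  simp [and_comm]

theorem exists_separates_isLinkage_empty (A B : Finset V) :
    ∃ S I P, Separates ∅ A B S ∧ IsLinkage ∅ A B I P ∧ S.card ≤ I.card := by
  classical
  refine ⟨A ∩ B, A ∩ B, fun v => [v], fun l hl => ?_, ⟨fun v hv => ?_, fun v _ w _ h => ?_⟩, le_rfl⟩
  · obtain ⟨a, ha, hla⟩ := hl.head_mem
    obtain ⟨b, hb, hlb⟩ := hl.getLast_mem
    match l, hl.isChain, hla, hlb with
    | [c], _, hla, hlb => exact ⟨c, by simp, by simp_all⟩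
    | c :: d :: l, hc, _, _ => simp at hc
  · rw [Finset.mem_inter] at hv
    exact ⟨by simp, ⟨v, hv.1, rfl⟩, v, hv.2, rfl⟩
  · simpa using h.symm

/-- **Menger's theorem** for digraphs, in its vertex version between two sets. -/
theorem exists_separates_isLinkage (hE : E.Finite) (A B : Finset V) :
    ∃ S I P, Separates E A B S ∧ IsLinkage E A B I P ∧ S.card ≤ I.card := by
  classical
  induction E, hE using Set.Finite.induction_on generalizing A B with
  | empty => exact exists_separates_isLinkage_empty A B
  | @insert xy E _ _ ih =>
    obtain ⟨x, y⟩ := xy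
    obtain ⟨S, I, P, hS, hP, hSI⟩ := ih A B
    have hswap : Separates (insert (y, x) (Prod.swap ⁻¹' E)) B A (insert y S) := hS.swap.insert_arc
    have of_le : ∀ T, Separates (insert (x, y) E) A B T → T.card ≤ S.card →
        ∃ S I P, Separates (insert (x, y) E) A B S ∧ IsLinkage (insert (x, y) E) A B I P ∧
          S.card ≤ I.card := fun T hT hTS =>
      ⟨T, I, P, hT, hP.mono (Set.subset_insert _ _), hTS.trans hSI⟩
    obtain ⟨T₁, I₁, P₁, hT₁, hP₁, hTI₁⟩ := ih A (insert x S)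
    obtain ⟨T₂, I₂, P₂, hT₂, hP₂, hTI₂⟩ := ih (insert y S) B
    have hT₁' : Separates (insert (x, y) E) A B T₁ :=
      hS.insert_arc.of_insert_arc (Finset.mem_insert_self _ _) hT₁
    have hT₂' : Separates (insert (x, y) E) A B T₂ := by
      have := (hswap.of_insert_arc (Finset.mem_insert_self _ _) hT₂.swap).swap
      rwa [preimage_swap_insert] at this
    by_cases hx : x ∈ S
    · exact of_le S (Finset.insert_eq_of_mem hx ▸ hS.insert_arc) le_rfl
    by_cases hy : y ∈ S
    · refine of_le S ?_ le_rfl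
      have := hswap.swap
      rwa [preimage_swap_insert, Finset.insert_eq_of_mem hy] at this
    rcases le_or_gt T₁.card S.card with h₁ | h₁
    · exact of_le T₁ hT₁' h₁
    rcases le_or_gt T₂.card S.card with h₂ | h₂
    · exact of_le T₂ hT₂' h₂
    obtain ⟨Q₁, hQ₁⟩ := hP₁.exists_isFan (by rw [Finset.card_insert_of_notMem hx]; omega)
    obtain ⟨Q₂, hQ₂⟩ := hP₂.reverse.exists_isFan (by rw [Finset.card_insert_of_notMem hy]; omega)
    obtain ⟨R, hR⟩ := hQ₁.exists_isLinkage_insert_arc hS hQ₂ hy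
    exact ⟨_, _, R, hS.insert_arc, hR, le_rfl⟩

end Menger

section BipartiteGraph

open Finset

/-- The double star with central edge `e = (i, j)` in the bipartite graph `E ⊆ α × β`: its leaves
`u ≠ x` are attached to `j`, and its leaves `v ≠ y` to `i`. -/
structure IsDoubleStar {α β : Type*} (E : Finset (α × β)) (u x : α) (v y : β) (e : α × β) :
    Prop where
  mem : e ∈ E
  u_mem : (u, e.2) ∈ E
  x_mem : (x, e.2) ∈ E
  v_mem : (e.1, v) ∈ E
  y_mem : (e.1, y) ∈ E
  fst_ne_u : e.1 ≠ u
  fst_ne_x : e.1 ≠ x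
  snd_ne_v : e.2 ≠ v
  snd_ne_y : e.2 ≠ y
  u_ne_x : u ≠ x
  v_ne_y : v ≠ y

section Counting

variable {α β : Type*} {E : Finset (α × β)} {X : Finset α} {Y : Finset β} {κ : ℕ}

theorem mul_card_filter_small_fiber_le {ι : Type*} [DecidableEq α] {E : Finset ι} {f : ι → α}
    (hf : ∀ e ∈ E, f e ∈ X) (c : ℕ) :
    c * #{e ∈ E | c * #X * #{e' ∈ E | f e' = f e} < #E} ≤ #E := by
  rcases E.eq_empty_or_nonempty with rfl | ⟨e₀, he₀⟩
  · simp
  set F := {e ∈ E | c * #X * #{e' ∈ E | f e' = f e} < #E}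
  have hfiber : ∀ a ∈ X, c * #X * #{e ∈ F | f e = a} ≤ #E := by
    intro a _
    rcases {e ∈ F | f e = a}.eq_empty_or_nonempty with h | ⟨e, he⟩
    · simp [h]
    · obtain ⟨heF, rfl⟩ := mem_filter.1 he
      refine le_trans ?_ (mem_filter.1 heF).2.le
      gcongr
      exact filter_subset _ _
  have hX : 0 < #X := card_pos.2 ⟨_, hf e₀ he₀⟩
  refine Nat.le_of_mul_le_mul_left ?_ hX
  calc #X * (c * #F) = ∑ a ∈ X, c * #X * #{e ∈ F | f e = a} := by
        rw [← mul_sum, ← card_eq_sum_card_fiberwise fun e he => hf e (mem_filter.1 he).1]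
        ring
    _ ≤ #X * #E := sum_le_card_nsmul _ _ _ hfiber

theorem sq_le_mul_card_offDiag {m : ℕ} (hm : 32 * κ ≤ m) (hX : m ≤ 4 * κ * (#X + 1)) :
    m ^ 2 ≤ 32 * κ ^ 2 * #X.offDiag := by
  classical
  rcases κ.eq_zero_or_pos with rfl | hκ
  · simp_all
  have h7 : 7 ≤ #X := by
    by_contra! h
    have : 4 * κ * (#X + 1) < 4 * κ * 8 := by gcongr; omega
    omega
  obtain ⟨d, hd⟩ := Nat.exists_eq_add_of_le' h7
  rw [offDiag_card, ← Nat.mul_sub_one, hd, Nat.add_sub_assoc (by norm_num)]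
  rw [hd] at hX
  calc m ^ 2 ≤ (4 * κ * (d + 7 + 1)) ^ 2 := by gcongr
    _ = 16 * κ ^ 2 * (d + 8) ^ 2 := by ring
    _ ≤ 16 * κ ^ 2 * (2 * ((d + 7) * (d + 6))) := by gcongr; nlinarith
    _ = _ := by ring

theorem card_fiber_snd_le [DecidableEq α] [DecidableEq β] {e : α × β} (hEX : E ⊆ X ×ˢ Y) :
    #{e' ∈ E | e'.2 = e.2} ≤ #{i ∈ X | i ≠ e.1 ∧ (i, e.2) ∈ E} + 1 := by
  rw [← card_insert_of_notMem (a := e.1) (by simp)]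
  refine card_le_card_of_injOn Prod.fst (fun e' he' => ?_) fun e₁ h₁ e₂ h₂ h => ?_
  · obtain ⟨he'E, he'e⟩ := mem_filter.1 he'
    have hmem : (e'.1, e.2) ∈ E := he'e ▸ he'E
    simp only [coe_insert, coe_filter, Set.mem_insert_iff, Set.mem_ofPred_eq]
    exact or_iff_not_imp_left.2 fun h => ⟨(mem_product.1 (hEX he'E)).1, h, hmem⟩
  · exact Prod.ext h ((mem_filter.1 h₁).2.trans (mem_filter.1 h₂).2.symm)

theorem card_fiber_fst_le [DecidableEq α] [DecidableEq β] {e : α × β} (hEX : E ⊆ X ×ˢ Y) :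
    #{e' ∈ E | e'.1 = e.1} ≤ #{j ∈ Y | j ≠ e.2 ∧ (e.1, j) ∈ E} + 1 := by
  rw [← card_insert_of_notMem (a := e.2) (by simp)]
  refine card_le_card_of_injOn Prod.snd (fun e' he' => ?_) fun e₁ h₁ e₂ h₂ h => ?_
  · obtain ⟨he'E, he'e⟩ := mem_filter.1 he'
    have hmem : (e.1, e'.2) ∈ E := he'e ▸ he'E
    simp only [coe_insert, coe_filter, Set.mem_insert_iff, Set.mem_ofPred_eq]
    exact or_iff_not_imp_left.2 fun h => ⟨(mem_product.1 (hEX he'E)).2, h, hmem⟩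
  · exact Prod.ext ((mem_filter.1 h₁).2.trans (mem_filter.1 h₂).2.symm) h

theorem card_le_two_mul_card_large_fibers [DecidableEq α] [DecidableEq β] (hEX : E ⊆ X ×ˢ Y)
    (hX : #X ≤ κ) (hY : #Y ≤ κ) :
    #E ≤ 2 * #{e ∈ E |
      #E ≤ 4 * κ * #{e' ∈ E | e'.1 = e.1} ∧ #E ≤ 4 * κ * #{e' ∈ E | e'.2 = e.2}} := by
  set F₁ := {e ∈ E | 4 * #X * #{e' ∈ E | e'.1 = e.1} < #E}
  set F₂ := {e ∈ E | 4 * #Y * #{e' ∈ E | e'.2 = e.2} < #E}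
  have h₁ : 4 * #F₁ ≤ #E :=
    mul_card_filter_small_fiber_le (fun e he => (mem_product.1 (hEX he)).1) 4
  have h₂ : 4 * #F₂ ≤ #E :=
    mul_card_filter_small_fiber_le (fun e he => (mem_product.1 (hEX he)).2) 4
  have h₃ : #E - #(F₁ ∪ F₂) ≤ #(E \ (F₁ ∪ F₂)) := le_card_sdiff _ _
  have h₄ := card_union_le F₁ F₂
  refine le_trans (b := 2 * #(E \ (F₁ ∪ F₂))) (by omega)
    (Nat.mul_le_mul_left 2 (card_le_card fun e he => ?_))
  simp only [F₁, F₂, mem_sdiff, mem_union, mem_filter, not_or, not_and, not_lt] at he ⊢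
  obtain ⟨he, hfst, hsnd⟩ := he
  exact ⟨he, (hfst he).trans (by gcongr), (hsnd he).trans (by gcongr)⟩

open Classical in
theorem pow_four_le_mul_card_isDoubleStar (hEX : E ⊆ X ×ˢ Y) (hκ : 32 * κ ≤ #E) {e : α × β}
    (he : e ∈ E) (hfst : #E ≤ 4 * κ * #{e' ∈ E | e'.1 = e.1})
    (hsnd : #E ≤ 4 * κ * #{e' ∈ E | e'.2 = e.2}) :
    #E ^ 4 ≤ 2 ^ 10 * κ ^ 4 * #{c ∈ (X ×ˢ X) ×ˢ (Y ×ˢ Y) |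
      IsDoubleStar E c.1.1 c.1.2 c.2.1 c.2.2 e} := by
  set A := {i ∈ X | i ≠ e.1 ∧ (i, e.2) ∈ E} with hA
  set B := {j ∈ Y | j ≠ e.2 ∧ (e.1, j) ∈ E} with hB
  have hsub : A.offDiag ×ˢ B.offDiag ⊆ {c ∈ (X ×ˢ X) ×ˢ (Y ×ˢ Y) |
      IsDoubleStar E c.1.1 c.1.2 c.2.1 c.2.2 e} := by
    rintro ⟨⟨u, x⟩, v, y⟩ hc
    simp only [mem_product, mem_offDiag, hA, hB, mem_filter] at hc ⊢
    obtain ⟨⟨⟨hu, hue, hu'⟩, ⟨hx, hxe, hx'⟩, hux⟩, ⟨hv, hve, hv'⟩, ⟨hy, hye, hy'⟩, hvy⟩ := hc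
    exact ⟨⟨⟨hu, hx⟩, hv, hy⟩,
      he, hu', hx', hv', hy', hue.symm, hxe.symm, hve.symm, hye.symm, hux, hvy⟩
  have hA' : #E ≤ 4 * κ * (#A + 1) := hsnd.trans (by gcongr; exact card_fiber_snd_le hEX)
  have hB' : #E ≤ 4 * κ * (#B + 1) := hfst.trans (by gcongr; exact card_fiber_fst_le hEX)
  calc #E ^ 4 = #E ^ 2 * #E ^ 2 := by ring
    _ ≤ (32 * κ ^ 2 * #A.offDiag) * (32 * κ ^ 2 * #B.offDiag) :=
        Nat.mul_le_mul (sq_le_mul_card_offDiag hκ hA') (sq_le_mul_card_offDiag hκ hB')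
    _ = 2 ^ 10 * κ ^ 4 * #(A.offDiag ×ˢ B.offDiag) := by rw [card_product]; ring
    _ ≤ _ := by gcongr

open Classical in
theorem card_pow_five_le_mul_sum_card_isDoubleStar (hEX : E ⊆ X ×ˢ Y) (hX : #X ≤ κ) (hY : #Y ≤ κ)
    (hκ : 32 * κ ≤ #E) :
    #E ^ 5 ≤ 2 ^ 11 * κ ^ 4 *
      ∑ c ∈ (X ×ˢ X) ×ˢ (Y ×ˢ Y), #{e ∈ E | IsDoubleStar E c.1.1 c.1.2 c.2.1 c.2.2 e} := by
  set T := (X ×ˢ X) ×ˢ (Y ×ˢ Y)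
  set F := {e ∈ E | #E ≤ 4 * κ * #{e' ∈ E | e'.1 = e.1} ∧ #E ≤ 4 * κ * #{e' ∈ E | e'.2 = e.2}}
  have hF : #E ≤ 2 * #F := card_le_two_mul_card_large_fibers hEX hX hY
  have hlow : ∀ e ∈ F, #E ^ 4 ≤ 2 ^ 10 * κ ^ 4 *
      #{c ∈ T | IsDoubleStar E c.1.1 c.1.2 c.2.1 c.2.2 e} := fun e he =>
    have ⟨heE, hfst, hsnd⟩ := mem_filter.1 he
    pow_four_le_mul_card_isDoubleStar hEX hκ heE hfst hsnd
  have hswap : ∑ e ∈ E, #{c ∈ T | IsDoubleStar E c.1.1 c.1.2 c.2.1 c.2.2 e} =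
      ∑ c ∈ T, #{e ∈ E | IsDoubleStar E c.1.1 c.1.2 c.2.1 c.2.2 e} :=
    sum_card_bipartiteAbove_eq_sum_card_bipartiteBelow
      fun e (c : (α × α) × β × β) => IsDoubleStar E c.1.1 c.1.2 c.2.1 c.2.2 e
  calc #E ^ 5 = #E * #E ^ 4 := by ring
    _ ≤ 2 * #F * #E ^ 4 := by gcongr
    _ = 2 * ∑ e ∈ F, #E ^ 4 := by rw [sum_const, smul_eq_mul, mul_assoc]
    _ ≤ 2 * ∑ e ∈ F, 2 ^ 10 * κ ^ 4 * #{c ∈ T | IsDoubleStar E c.1.1 c.1.2 c.2.1 c.2.2 e} := by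
        gcongr with e he; exact hlow e he
    _ ≤ 2 * ∑ e ∈ E, 2 ^ 10 * κ ^ 4 * #{c ∈ T | IsDoubleStar E c.1.1 c.1.2 c.2.1 c.2.2 e} := by
        gcongr; exact filter_subset _ _
    _ = _ := by rw [← mul_sum, hswap]; ring

open Classical in
theorem exists_card_isDoubleStar (hκ : 0 < κ) (hEX : E ⊆ X ×ˢ Y) (hX : #X ≤ κ) (hY : #Y ≤ κ)
    (hE : 2 ^ 25 * κ ^ 8 ≤ #E ^ 5) :
    ∃ u x v y, 2 ^ 10 < #{e ∈ E | IsDoubleStar E u x v y e} := by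
  have h32 : 32 * κ ≤ #E := by
    refine (Nat.pow_le_pow_iff_left (n := 5) (by norm_num)).1 (le_trans ?_ hE)
    calc (32 * κ) ^ 5 = 2 ^ 25 * κ ^ 5 := by ring
      _ ≤ 2 ^ 25 * κ ^ 8 := by gcongr; omega
  by_contra! hfew
  refine hE.not_gt ?_
  calc #E ^ 5 ≤ 2 ^ 11 * κ ^ 4 *
        ∑ c ∈ (X ×ˢ X) ×ˢ (Y ×ˢ Y), #{e ∈ E | IsDoubleStar E c.1.1 c.1.2 c.2.1 c.2.2 e} :=
        card_pow_five_le_mul_sum_card_isDoubleStar hEX hX hY h32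
    _ ≤ 2 ^ 11 * κ ^ 4 * (#((X ×ˢ X) ×ˢ (Y ×ˢ Y)) * 2 ^ 10) := by
        gcongr
        exact sum_le_card_nsmul _ _ _ fun c _ => hfew _ _ _ _
    _ ≤ 2 ^ 11 * κ ^ 4 * ((κ * κ) * (κ * κ) * 2 ^ 10) := by
        simp only [card_product]
        gcongr
    _ = 2 ^ 21 * κ ^ 8 := by ring
    _ < 2 ^ 25 * κ ^ 8 := by gcongr <;> omega

end Counting

section OrderPatterns

variable {α β γ : Type*} [LT α] [LT β] [LT γ] {E : Finset (α × β)} {p q : α → β → γ}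
  {u x : α} {v y : β}

/-- A 4-cycle of the bipartite graph `E` along which the labellings `p` and `q` are ordered in the
same way at opposite vertices. -/
structure IsCompatibleSquare (E : Finset (α × β)) (p q : α → β → γ) (i i' : α) (j j' : β) :
    Prop where
  ne_left : i ≠ i'
  ne_right : j ≠ j'
  mem : (i, j) ∈ E
  mem_right : (i, j') ∈ E
  mem_left : (i', j) ∈ E
  mem_both : (i', j') ∈ E
  p_iff : p i j < p i j' ↔ p i' j < p i' j'
  q_iff : q i j < q i' j ↔ q i j' < q i' j'

/-- A 6-cycle `z a b w b' a'` of the bipartite graph `E`, with `z`, `b`, `b'` on the left. The two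
paths `z a b w` and `z a' b' w` lie in the same way with respect to the orders, and `b`, `b'`
(respectively `a`, `a'`) are ordered as the labels at `z` (respectively `w`). -/
structure IsCompatibleHexagon (E : Finset (α × β)) (p q : α → β → γ) (z b b' : α) (w a a' : β) :
    Prop where
  z_ne_b : z ≠ b
  z_ne_b' : z ≠ b'
  b_ne_b' : b ≠ b'
  w_ne_a : w ≠ a
  w_ne_a' : w ≠ a'
  a_ne_a' : a ≠ a'
  za_mem : (z, a) ∈ E
  za'_mem : (z, a') ∈ E
  ba_mem : (b, a) ∈ E
  b'a'_mem : (b', a') ∈ E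
  bw_mem : (b, w) ∈ E
  b'w_mem : (b', w) ∈ E
  lt_z_iff : b < z ↔ b' < z
  lt_w_iff : a < w ↔ a' < w
  p_z_iff : p z a < p z a' ↔ b < b'
  p_b_iff : p b a < p b w ↔ p b' a' < p b' w
  q_w_iff : q b w < q b' w ↔ a < a'
  q_a_iff : q b a < q z a ↔ q b' a' < q z a'

/-- The comparisons attached to the double star with leaves `u`, `x`, `v`, `y` and central edge
`e`. -/
def orderType (p q : α → β → γ) (u x : α) (v y : β) (e : α × β) : Fin 10 → Prop :=
  ![e.1 < u, e.1 < x, e.2 < v, e.2 < y, q u e.2 < q x e.2, p e.1 v < p e.1 y,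
    p e.1 e.2 < p e.1 v, p e.1 e.2 < p e.1 y, q e.1 e.2 < q u e.2, q e.1 e.2 < q x e.2]

theorem iff_of_not_iff_of_not_iff {P Q R : Prop} (hQ : ¬(P ↔ Q)) (hR : ¬(P ↔ R)) : Q ↔ R := by
  tauto

theorem orderType_eq_iff {a a' : β} {b b' : α} :
    orderType p q u x v y (b, a) = orderType p q u x v y (b', a') ↔
      (b < u ↔ b' < u) ∧ (b < x ↔ b' < x) ∧ (a < v ↔ a' < v) ∧ (a < y ↔ a' < y) ∧
      (q u a < q x a ↔ q u a' < q x a') ∧ (p b v < p b y ↔ p b' v < p b' y) ∧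
      (p b a < p b v ↔ p b' a' < p b' v) ∧ (p b a < p b y ↔ p b' a' < p b' y) ∧
      (q b a < q u a ↔ q b' a' < q u a') ∧ (q b a < q x a ↔ q b' a' < q x a') := by
  simp [orderType]

theorem ne_left_of_orderType_eq {a a' : β} {b b' : α} (h : IsDoubleStar E u x v y (b, a))
    (h' : IsDoubleStar E u x v y (b', a')) (hne : (b, a) ≠ (b', a'))
    (heq : orderType p q u x v y (b, a) = orderType p q u x v y (b', a'))
    (hsq : ∀ i i' j j', ¬IsCompatibleSquare E p q i i' j j') : b ≠ b' := by
  rintro rfl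
  obtain ⟨-, -, -, -, qux, -, -, -, qu, qx⟩ := orderType_eq_iff.1 heq
  have haa : a ≠ a' := by grind
  have hu := fun hp => hsq _ _ _ _ ⟨h.fst_ne_u, haa, h.mem, h'.mem, h.u_mem, h'.u_mem, hp, qu⟩
  have hx := fun hp => hsq _ _ _ _ ⟨h.fst_ne_x, haa, h.mem, h'.mem, h.x_mem, h'.x_mem, hp, qx⟩
  have hux := fun hp => hsq _ _ _ _
    ⟨h.u_ne_x, haa, h.u_mem, h'.u_mem, h.x_mem, h'.x_mem, hp, qux⟩
  exact hux (iff_of_not_iff_of_not_iff hu hx)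

theorem ne_right_of_orderType_eq {a a' : β} {b b' : α} (h : IsDoubleStar E u x v y (b, a))
    (h' : IsDoubleStar E u x v y (b', a')) (hne : (b, a) ≠ (b', a'))
    (heq : orderType p q u x v y (b, a) = orderType p q u x v y (b', a'))
    (hsq : ∀ i i' j j', ¬IsCompatibleSquare E p q i i' j j') : a ≠ a' := by
  rintro rfl
  obtain ⟨-, -, -, -, -, pvy, pv, py, -, -⟩ := orderType_eq_iff.1 heq
  have hbb : b ≠ b' := by grind
  have hv := fun hq => hsq _ _ _ _ ⟨hbb, h.snd_ne_v, h.mem, h.v_mem, h'.mem, h'.v_mem, pv, hq⟩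
  have hy := fun hq => hsq _ _ _ _ ⟨hbb, h.snd_ne_y, h.mem, h.y_mem, h'.mem, h'.y_mem, py, hq⟩
  have hvy := fun hq => hsq _ _ _ _
    ⟨hbb, h.v_ne_y, h.v_mem, h.y_mem, h'.v_mem, h'.y_mem, pvy, hq⟩
  exact hvy (iff_of_not_iff_of_not_iff hv hy)

/-- Two leaves on the same side give two chances for each comparison; when both fail, the two leaves
agree with each other. -/
theorem exists_square_or_hexagon_of_orderType_eq {e e' : α × β} (h : IsDoubleStar E u x v y e)
    (h' : IsDoubleStar E u x v y e') (hne : e ≠ e')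
    (heq : orderType p q u x v y e = orderType p q u x v y e') :
    (∃ i i' j j', IsCompatibleSquare E p q i i' j j') ∨
      ∃ z b b' w a a', IsCompatibleHexagon E p q z b b' w a a' := by
  obtain ⟨b, a⟩ := e
  obtain ⟨b', a'⟩ := e'
  by_contra! hcon
  obtain ⟨hsq, hhex⟩ := hcon
  have hbb := ne_left_of_orderType_eq h h' hne heq hsq
  have haa := ne_right_of_orderType_eq h h' hne heq hsq
  obtain ⟨ltu, ltx, ltv, lty, qux, pvy, pv, py, qu, qx⟩ := orderType_eq_iff.1 heq
  have hp : ¬(p u a < p u a' ↔ p x a < p x a') := fun hp => hsq _ _ _ _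
    ⟨h.u_ne_x, haa, h.u_mem, h'.u_mem, h.x_mem, h'.x_mem, hp, qux⟩
  have hq : ¬(q b v < q b' v ↔ q b y < q b' y) := fun hq => hsq _ _ _ _
    ⟨hbb, h.v_ne_y, h.v_mem, h.y_mem, h'.v_mem, h'.y_mem, pvy, hq⟩
  obtain ⟨z, hz, hz', hza, hza', ltz, qz, pz⟩ : ∃ z, b ≠ z ∧ b' ≠ z ∧ (z, a) ∈ E ∧ (z, a') ∈ E ∧
      (b < z ↔ b' < z) ∧ (q b a < q z a ↔ q b' a' < q z a') ∧ (p z a < p z a' ↔ b < b') := by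
    by_cases hu : p u a < p u a' ↔ b < b'
    · exact ⟨u, h.fst_ne_u, h'.fst_ne_u, h.u_mem, h'.u_mem, ltu, qu, hu⟩
    · exact ⟨x, h.fst_ne_x, h'.fst_ne_x, h.x_mem, h'.x_mem, ltx, qx,
        iff_of_not_iff_of_not_iff hp hu⟩
  obtain ⟨w, hw, hw', hbw, hbw', ltw, pw, qw⟩ : ∃ w, a ≠ w ∧ a' ≠ w ∧ (b, w) ∈ E ∧ (b', w) ∈ E ∧
      (a < w ↔ a' < w) ∧ (p b a < p b w ↔ p b' a' < p b' w) ∧ (q b w < q b' w ↔ a < a') := by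
    by_cases hv : q b v < q b' v ↔ a < a'
    · exact ⟨v, h.snd_ne_v, h'.snd_ne_v, h.v_mem, h'.v_mem, ltv, pv, hv⟩
    · exact ⟨y, h.snd_ne_y, h'.snd_ne_y, h.y_mem, h'.y_mem, lty, py,
        iff_of_not_iff_of_not_iff hq hv⟩
  exact hhex z b b' w a a' ⟨hz.symm, hz'.symm, hbb, hw.symm, hw'.symm, haa, hza, hza', h.mem,
    h'.mem, hbw, hbw', ltz, ltw, pz, pw, qw, qz⟩

theorem exists_square_or_hexagon {X : Finset α} {Y : Finset β} {κ : ℕ} (hκ : 0 < κ)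
    (hEX : E ⊆ X ×ˢ Y) (hX : #X ≤ κ) (hY : #Y ≤ κ) (hE : 2 ^ 25 * κ ^ 8 ≤ #E ^ 5)
    (p q : α → β → γ) :
    (∃ i i' j j', IsCompatibleSquare E p q i i' j j') ∨
      ∃ z b b' w a a', IsCompatibleHexagon E p q z b b' w a a' := by
  classical
  obtain ⟨u, x, v, y, hcard⟩ := exists_card_isDoubleStar hκ hEX hX hY hE
  obtain ⟨e, he, e', he', hne, heq⟩ := exists_ne_map_eq_of_card_lt_of_maps_to
    (t := univ) (f := orderType p q u x v y) (by simpa using hcard) (fun _ _ => by simp)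
  exact exists_square_or_hexagon_of_orderType_eq (mem_filter.1 he).2 (mem_filter.1 he').2 hne heq

end OrderPatterns

end BipartiteGraph

section Cycles

variable {V : Type*} {G : SimpleGraph V} {ℓ : ℕ} {f : ℤ → V} {s t r : V} {Q Q' W R : List V}
  {a b : ℤ}

/-- `Q` lists the interior vertices of a walk of `G` from `s` to `t`. -/
def IsRoute (G : SimpleGraph V) (s : V) (Q : List V) (t : V) : Prop :=
  (s :: Q ++ [t]).IsChain G.Adj

/-- No cycle of `G` has more than `ℓ` edges. -/
def CycleLengthLE (G : SimpleGraph V) (ℓ : ℕ) : Prop :=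
  ∀ ⦃v⦄ (p : G.Walk v v), p.IsCycle → p.length ≤ ℓ

/-- `f` runs around a cycle of length `ℓ` of `G`, one vertex per unit of time. Indexing the vertices
by `ℤ` rather than `ZMod ℓ` makes the order of positions along the cycle available. -/
structure IsCycleParam (G : SimpleGraph V) (ℓ : ℕ) (f : ℤ → V) : Prop where
  three_le : 3 ≤ ℓ
  periodic : Function.Periodic f ℓ
  adj : ∀ a, G.Adj (f a) (f (a + 1))
  eq_of_map_eq : ∀ ⦃a b⦄, f a = f b → (a - b).natAbs < ℓ → a = b

/-- `R` lists distinct vertices, none of which lies on the cycle run through by `f`. -/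
def IsOffCycle (f : ℤ → V) (R : List V) : Prop :=
  R.Nodup ∧ ∀ v ∈ R, v ∉ Set.range f

namespace IsRoute

theorem append_cons_iff :
    IsRoute G s (Q ++ t :: Q') r ↔ IsRoute G s Q t ∧ IsRoute G t Q' r := by
  have := List.isChain_split (R := G.Adj) (l₁ := s :: Q) (c := t) (l₂ := Q' ++ [r])
  simpa [IsRoute] using this

theorem trans (h : IsRoute G s Q t) (h' : IsRoute G t Q' r) : IsRoute G s (Q ++ t :: Q') r :=
  append_cons_iff.2 ⟨h, h'⟩

theorem symm (h : IsRoute G s Q t) : IsRoute G t Q.reverse s := by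
  have := List.isChain_reverse.2 (List.IsChain.imp (fun _ _ hab => hab.symm) h)
  simpa [IsRoute] using this

theorem exists_isCycle (h : IsRoute G s Q s) (hQ : (s :: Q).Nodup) (hl : 2 ≤ Q.length) :
    ∃ p : G.Walk s s, p.IsCycle ∧ p.length = Q.length + 1 := by
  let p : G.Walk s s := (Walk.ofSupport (s :: Q ++ [s]) (by simp) h).copy rfl (by simp)
  have hp : p.support = s :: Q ++ [s] :=
    (Walk.support_copy _ _ _).trans (Walk.support_ofSupport _ _)
  have hlen : p.length = Q.length + 1 := by
    have := p.length_support
    simp only [hp, List.length_append, List.length_cons, List.length_nil] at this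
    omega
  refine ⟨p, Walk.isCycle_iff_isPath_tail_and_le_length.2 ⟨?_, by omega⟩, hlen⟩
  rw [Walk.isPath_def, Walk.support_tail_of_not_nil p (by rw [Walk.not_nil_iff_lt_length]; omega),
    hp]
  simpa using (List.perm_append_singleton s Q).nodup_iff.2 hQ

end IsRoute

namespace IsOffCycle

theorem perm (h : IsOffCycle f R) (hR : R.Perm Q) : IsOffCycle f Q :=
  ⟨hR.nodup_iff.1 h.1, fun v hv => h.2 v (hR.mem_iff.2 hv)⟩

theorem append (h : IsOffCycle f Q) (h' : IsOffCycle f R) (hQR : Q.Disjoint R) :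
    IsOffCycle f (Q ++ R) :=
  ⟨List.nodup_append'.2 ⟨h.1, h'.1, hQR⟩, fun v hv => (List.mem_append.1 hv).elim (h.2 v) (h'.2 v)⟩

theorem comp_neg (h : IsOffCycle f R) : IsOffCycle (fun a => f (-a)) R :=
  ⟨h.1, fun v hv ⟨a, ha⟩ => h.2 v hv ⟨-a, ha⟩⟩

end IsOffCycle

theorem nodup_int_range (a b : ℤ) : (Int.range a b).Nodup :=
  List.nodup_range.map fun _ _ h => by simpa using h

theorem nodup_append_int_range {A : List ℤ} (hA : A.Nodup) (h : ∀ x ∈ A, x < a) (b : ℤ) :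
    (A ++ Int.range a b).Nodup :=
  List.nodup_append'.2 ⟨hA, nodup_int_range a b, fun x hx hx' =>
    (Int.mem_range_iff.1 hx').1.not_gt (h x hx)⟩

theorem length_int_range (a b : ℤ) : (Int.range a b).length = (b - a).toNat := by
  simp [Int.range]

theorem int_range_add_one (hab : a < b) :
    Int.range a (b + 1) = a :: (Int.range (a + 1) b ++ [b]) := by
  obtain ⟨k, rfl⟩ : ∃ k : ℕ, b = a + 1 + k := ⟨(b - a - 1).toNat, by omega⟩
  rw [Int.range, Int.range, show (a + 1 + k + 1 - a).toNat = k + 2 by omega,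
    show (a + 1 + k - (a + 1)).toNat = k by omega, List.range_succ, List.range_succ_eq_map]
  simp [Function.comp_def, add_comm, add_left_comm]

namespace IsCycleParam

theorem comp_neg (hf : IsCycleParam G ℓ f) : IsCycleParam G ℓ fun a => f (-a) where
  three_le := hf.three_le
  periodic a := by simpa only [neg_add, ← sub_eq_add_neg] using hf.periodic.sub_eq (-a)
  adj a := by simpa using (hf.adj (-(a + 1))).symm
  eq_of_map_eq a b hab h := neg_injective (hf.eq_of_map_eq hab (by omega))

theorem nodup_map (hf : IsCycleParam G ℓ f) {A : List ℤ} (hA : A.Nodup) (m : ℤ)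
    (hm : ∀ a ∈ A, m ≤ a ∧ a < m + ℓ) : (A.map f).Nodup :=
  hA.map_on fun a ha b hb hab => hf.eq_of_map_eq hab (by grind)

theorem isRoute (hf : IsCycleParam G ℓ f) (hab : a < b) :
    IsRoute G (f a) ((Int.range (a + 1) b).map f) (f b) := by
  have hchain : ((Int.range a (b + 1)).map f).IsChain G.Adj := by
    obtain ⟨k, rfl⟩ : ∃ k : ℕ, b = a + k := ⟨(b - a).toNat, by omega⟩
    rw [Int.range, show (a + k + 1 - a).toNat = k + 1 by omega, List.map_map, List.isChain_map,
      List.isChain_range_succ]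
    intro i _
    simpa [add_assoc] using hf.adj (a + i)
  simpa [IsRoute, int_range_add_one hab] using hchain

/-- A closed walk through the positions `A` of the cycle and the off-cycle vertices `R` is a cycle,
hence no longer than the given one. -/
theorem length_add_length_le (hf : IsCycleParam G ℓ f) (hG : CycleLengthLE G ℓ) {A : List ℤ}
    (m : ℤ) (hA : A.Nodup) (hm : ∀ a ∈ A, m ≤ a ∧ a < m + ℓ) (hR : IsOffCycle f R)
    (hQ : IsRoute G s Q s) (hperm : (s :: Q).Perm (A.map f ++ R))
    (hlen : 3 ≤ A.length + R.length) : A.length + R.length ≤ ℓ := by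
  have hl : Q.length + 1 = A.length + R.length := by simpa using hperm.length_eq
  have hnodup : (s :: Q).Nodup := by
    rw [hperm.nodup_iff, List.nodup_append']
    refine ⟨hf.nodup_map hA m hm, hR.1, fun v hv hvR => ?_⟩
    obtain ⟨a, -, rfl⟩ := List.mem_map.1 hv
    exact hR.2 _ hvR ⟨a, rfl⟩
  obtain ⟨p, hp, hpl⟩ := hQ.exists_isCycle hnodup (by omega)
  rw [← hl, ← hpl]
  exact hG p hp

theorem length_chord_le (hf : IsCycleParam G ℓ f) (hG : CycleLengthLE G ℓ) (hab : a < b)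
    (hba : b < a + ℓ) (hQ : IsRoute G (f a) Q (f b)) (hoff : IsOffCycle f Q) (hne : Q ≠ []) :
    1 + (Q.length : ℤ) ≤ b - a := by
  classical
  rw [← hf.periodic a] at hQ
  have hlen := List.length_pos_iff.2 hne
  have key := hf.length_add_length_le hG (A := Int.range b (a + ℓ + 1)) b
    (nodup_int_range _ _) (by simp only [Int.mem_range_iff]; omega) hoff ((hf.isRoute hba).trans hQ)
    (by simp [int_range_add_one, *]) (by simp only [length_int_range]; omega)
  simp only [length_int_range] at key
  omega

variable {x₁ x₂ x₃ x₄ x₅ x₆ y₁ y₂ z₁ z₂ : ℤ}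

/-- The new cycle runs along the arcs from `x₂` to `x₃` and from `x₄` to `x₁` and along both
chords. -/
theorem length_crossing_chords_le (hf : IsCycleParam G ℓ f) (hG : CycleLengthLE G ℓ)
    (h₁₂ : x₁ < x₂) (h₂₃ : x₂ < x₃) (h₃₄ : x₃ < x₄) (h₄₁ : x₄ < x₁ + ℓ)
    (hQ : IsRoute G (f x₁) Q (f x₃)) (hQ' : IsRoute G (f x₂) Q' (f x₄))
    (hoff : IsOffCycle f (Q ++ Q')) :
    2 + (Q.length : ℤ) + Q'.length ≤ (x₂ - x₁) + (x₄ - x₃) := by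
  classical
  rw [← hf.periodic x₁] at hQ
  have hroute := (hf.isRoute h₂₃).trans (hQ.symm.trans ((hf.isRoute h₄₁).symm.trans hQ'.symm))
  have key := hf.length_add_length_le hG (R := Q ++ Q')
    (A := Int.range x₂ (x₃ + 1) ++ Int.range x₄ (x₁ + ℓ + 1)) x₂
    (nodup_append_int_range (nodup_int_range _ _) (by simp only [Int.mem_range_iff]; omega) _)
    (by simp only [List.mem_append, Int.mem_range_iff]; omega) hoff hroute
    (by
      rw [int_range_add_one h₂₃, int_range_add_one h₄₁, List.perm_iff_count]
      intro v
      simp only [List.count_cons, List.count_append, List.count_reverse, beq_iff_eq,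
        List.cons_append, List.append_assoc, List.nil_append, List.map_cons, List.map_append,
        List.map_nil]
      omega)
    (by simp only [List.length_append, length_int_range]; omega)
  simp only [List.length_append, length_int_range] at key
  omega

theorem length_three_chords_le_of_lt (hf : IsCycleParam G ℓ f) (hG : CycleLengthLE G ℓ)
    (h₁₂ : x₁ < x₂) (h₂₃ : x₂ < x₃) (h₃₄ : x₃ < x₄) (h₄₅ : x₄ < x₅) (h₅₆ : x₅ < x₆)
    (h₆₁ : x₆ < x₁ + ℓ) (hQ : IsRoute G (f x₁) Q (f x₃)) (hQ' : IsRoute G (f x₂) Q' (f x₅))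
    (hW : IsRoute G (f x₄) W (f x₆)) (hoff : IsOffCycle f (Q ++ Q' ++ W)) :
    3 + (Q.length : ℤ) + Q'.length + W.length ≤ (x₂ - x₁) + (x₄ - x₃) + (x₆ - x₅) := by
  classical
  rw [← hf.periodic x₁] at hQ
  have hroute := (hf.isRoute h₂₃).trans <| hQ.symm.trans <| (hf.isRoute h₆₁).symm.trans <|
    hW.symm.trans <| (hf.isRoute h₄₅).trans hQ'.symm
  have key := hf.length_add_length_le hG (R := Q ++ Q' ++ W)
    (A := Int.range x₂ (x₃ + 1) ++ Int.range x₄ (x₅ + 1) ++ Int.range x₆ (x₁ + ℓ + 1)) x₂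
    (nodup_append_int_range
      (nodup_append_int_range (nodup_int_range _ _) (by simp only [Int.mem_range_iff]; omega) _)
      (by simp only [List.mem_append, Int.mem_range_iff]; omega) _)
    (by simp only [List.mem_append, Int.mem_range_iff]; omega) hoff hroute
    (by
      rw [int_range_add_one h₂₃, int_range_add_one h₄₅, int_range_add_one h₆₁,
        List.perm_iff_count]
      intro v
      simp only [List.count_cons, List.count_append, List.count_reverse, beq_iff_eq,
        List.cons_append, List.append_assoc, List.nil_append, List.map_cons, List.map_append,
        List.map_nil]
      omega)
    (by simp only [List.length_append, length_int_range]; omega)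
  simp only [List.length_append, length_int_range] at key
  omega

theorem length_two_chords_le (hf : IsCycleParam G ℓ f) (hG : CycleLengthLE G ℓ)
    (hx : x₁ ∈ Set.Ico 0 (ℓ : ℤ) ∧ x₂ ∈ Set.Ico 0 (ℓ : ℤ))
    (hy : y₁ ∈ Set.Ico 0 (ℓ : ℤ) ∧ y₂ ∈ Set.Ico 0 (ℓ : ℤ)) (hx₁₂ : x₁ ≠ x₂) (hy₁₂ : y₁ ≠ y₂)
    (hsep : max x₁ x₂ < min y₁ y₂ ∨ max y₁ y₂ < min x₁ x₂) (horder : x₁ < x₂ ↔ y₁ < y₂)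
    (hQ : IsRoute G (f x₁) Q (f y₁)) (hQ' : IsRoute G (f x₂) Q' (f y₂))
    (hoff : IsOffCycle f (Q ++ Q')) :
    2 + Q.length + Q'.length ≤ (x₁ - x₂).natAbs + (y₁ - y₂).natAbs := by
  simp only [Set.mem_Ico] at hx hy
  wlog hxy : max x₁ x₂ < min y₁ y₂ generalizing x₁ x₂ y₁ y₂ Q Q'
  · have := this hy₁₂ hx₁₂ hsep.symm horder.symm hQ.symm hQ'.symm
      (hoff.perm ((List.reverse_perm Q).symm.append (List.reverse_perm Q').symm)) hy hx (by omega)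
    simp only [List.length_reverse] at this
    omega
  wlog hlt : x₁ < x₂ generalizing x₁ x₂ y₁ y₂ Q Q'
  · have := this hx₁₂.symm hy₁₂.symm (by omega) (by omega) hQ' hQ
      (hoff.perm List.perm_append_comm) hx.symm hy.symm (by omega) (by omega)
    omega
  have := hf.length_crossing_chords_le hG hlt (by omega) (horder.1 hlt) (by omega) hQ hQ' hoff
  omega

theorem length_three_chords_le_of_max_lt_min (hf : IsCycleParam G ℓ f) (hG : CycleLengthLE G ℓ)
    (h₁₂ : x₁ < x₂) (hxy : x₂ < min y₁ y₂) (hyz : max y₁ y₂ < min z₁ z₂)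
    (hzx : max z₁ z₂ < x₁ + ℓ) (hy₁₂ : y₁ ≠ y₂) (hz₁₂ : z₁ ≠ z₂) (horder : y₁ < y₂ ↔ z₁ < z₂)
    (hQ : IsRoute G (f x₁) Q (f y₁)) (hQ' : IsRoute G (f x₂) Q' (f z₁))
    (hW : IsRoute G (f y₂) W (f z₂)) (hoff : IsOffCycle f (Q ++ Q' ++ W)) :
    3 + Q.length + Q'.length + W.length ≤
      (x₁ - x₂).natAbs + (y₁ - y₂).natAbs + (z₁ - z₂).natAbs := by
  by_cases hy : y₁ < y₂
  · have := hf.length_three_chords_le_of_lt hG h₁₂ (by omega) hy (by omega) (horder.1 hy)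
      (by omega) hQ hQ' hW hoff
    omega
  · have hshift (x : ℤ) : f (-(-x + ℓ)) = f x := by
      rw [neg_add, neg_neg, ← sub_eq_add_neg, hf.periodic.sub_eq]
    have hperm : (Q ++ Q' ++ W).Perm (Q' ++ Q ++ W.reverse) :=
      List.perm_append_comm.append (List.reverse_perm W).symm
    have := hf.comp_neg.length_three_chords_le_of_lt hG (x₁ := -x₂) (x₂ := -x₁) (x₃ := -z₁ + ℓ)
      (x₄ := -z₂ + ℓ) (x₅ := -y₁ + ℓ) (x₆ := -y₂ + ℓ) (by omega) (by omega) (by omega) (by omega)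
      (by omega) (by omega) (by simpa only [hshift, neg_neg] using hQ')
      (by simpa only [hshift, neg_neg] using hQ) (by simpa only [hshift] using hW.symm)
      (hoff.perm hperm).comp_neg
    simp only [List.length_reverse] at this
    omega

theorem length_three_chords_le_of_lt_add (hf : IsCycleParam G ℓ f) (hG : CycleLengthLE G ℓ)
    (hxy : max x₁ x₂ < min y₁ y₂) (hxz : max x₁ x₂ < min z₁ z₂)
    (hyx : max y₁ y₂ < min x₁ x₂ + ℓ) (hzx : max z₁ z₂ < min x₁ x₂ + ℓ)
    (hy₁₂ : y₁ ≠ y₂) (hz₁₂ : z₁ ≠ z₂)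
    (hyz : x₁ < x₂ ∧ max y₁ y₂ < min z₁ z₂ ∨ x₂ < x₁ ∧ max z₁ z₂ < min y₁ y₂)
    (horder : y₁ < y₂ ↔ z₁ < z₂)
    (hQ : IsRoute G (f x₁) Q (f y₁)) (hQ' : IsRoute G (f x₂) Q' (f z₁))
    (hW : IsRoute G (f y₂) W (f z₂)) (hoff : IsOffCycle f (Q ++ Q' ++ W)) :
    3 + Q.length + Q'.length + W.length ≤
      (x₁ - x₂).natAbs + (y₁ - y₂).natAbs + (z₁ - z₂).natAbs := by
  rcases hyz with ⟨hlt, hyz⟩ | ⟨hlt, hzy⟩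
  · exact hf.length_three_chords_le_of_max_lt_min hG hlt (by omega) hyz (by omega) hy₁₂ hz₁₂ horder
      hQ hQ' hW hoff
  · have := hf.length_three_chords_le_of_max_lt_min hG hlt (by omega) hzy (by omega) hz₁₂ hy₁₂
      horder.symm hQ' hQ hW.symm
      (hoff.perm (List.perm_append_comm.append (List.reverse_perm W).symm))
    simp only [List.length_reverse] at this
    omega

theorem length_three_chords_le (hf : IsCycleParam G ℓ f) (hG : CycleLengthLE G ℓ)
    (hx : x₁ ∈ Set.Ico 0 (ℓ : ℤ) ∧ x₂ ∈ Set.Ico 0 (ℓ : ℤ))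
    (hy : y₁ ∈ Set.Ico 0 (ℓ : ℤ) ∧ y₂ ∈ Set.Ico 0 (ℓ : ℤ))
    (hz : z₁ ∈ Set.Ico 0 (ℓ : ℤ) ∧ z₂ ∈ Set.Ico 0 (ℓ : ℤ))
    (hy₁₂ : y₁ ≠ y₂) (hz₁₂ : z₁ ≠ z₂)
    (hxy : max x₁ x₂ < min y₁ y₂ ∧ max x₁ x₂ < min z₁ z₂ ∨
      max y₁ y₂ < min x₁ x₂ ∧ max z₁ z₂ < min x₁ x₂)
    (hyz : x₁ < x₂ ∧ max y₁ y₂ < min z₁ z₂ ∨ x₂ < x₁ ∧ max z₁ z₂ < min y₁ y₂)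
    (horder : y₁ < y₂ ↔ z₁ < z₂)
    (hQ : IsRoute G (f x₁) Q (f y₁)) (hQ' : IsRoute G (f x₂) Q' (f z₁))
    (hW : IsRoute G (f y₂) W (f z₂)) (hoff : IsOffCycle f (Q ++ Q' ++ W)) :
    3 + Q.length + Q'.length + W.length ≤
      (x₁ - x₂).natAbs + (y₁ - y₂).natAbs + (z₁ - z₂).natAbs := by
  simp only [Set.mem_Ico] at hx hy hz
  rcases hxy with ⟨hxy, hxz⟩ | ⟨hyx, hzx⟩
  · exact hf.length_three_chords_le_of_lt_add hG hxy hxz (by omega) (by omega) hy₁₂ hz₁₂ hyz horder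
      hQ hQ' hW hoff
  · have := hf.length_three_chords_le_of_lt_add hG (x₁ := x₁) (x₂ := x₂) (y₁ := y₁ + ℓ)
      (y₂ := y₂ + ℓ) (z₁ := z₁ + ℓ) (z₂ := z₂ + ℓ) (by omega) (by omega) (by omega) (by omega)
      (by omega) (by omega) (by omega) (by omega) (by rwa [hf.periodic]) (by rwa [hf.periodic])
      (by rwa [hf.periodic, hf.periodic]) hoff
    omega

end IsCycleParam

end Cycles

section PathSystems

variable {V ι : Type*} {G : SimpleGraph V} {ℓ : ℕ} {f g : ℤ → V} {x y c : ℤ}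

open Classical in
/-- The number of times in `[0, x]` at which the cycle `f` meets the cycle `g`. These meetings cut
the cycle `f` into segments, and two positions lie in the same segment if they have the same
number. -/
noncomputable def segment (f g : ℤ → V) (x : ℤ) : ℕ :=
  ((Finset.Icc 0 x).filter fun c => f c ∈ Set.range g).card

theorem segment_mono (f g : ℤ → V) : Monotone (segment f g) := fun _ _ h => by
  classical
  exact Finset.card_le_card (Finset.filter_subset_filter _ (Finset.Icc_subset_Icc le_rfl h))

theorem max_lt_min_of_segment_lt {x' y' : ℤ} (hx : segment f g x = segment f g x')
    (hy : segment f g y = segment f g y') (h : segment f g x < segment f g y) :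
    max x x' < min y y' := by
  have hlt {a b : ℤ} (hab : segment f g a < segment f g b) : a < b :=
    (segment_mono f g).reflect_lt hab
  exact max_lt (lt_min (hlt h) (hlt (hy ▸ h))) (lt_min (hlt (hx ▸ h)) (hlt (hx ▸ hy ▸ h)))

theorem notMem_range_of_segment_eq (h : segment f g x = segment f g y) (hx : 0 ≤ x) (hxc : x < c)
    (hcy : c ≤ y) : f c ∉ Set.range g := fun hc => by
  classical
  refine (Finset.card_lt_card (Finset.ssubset_iff_of_subset ?_ |>.2 ⟨c, ?_, ?_⟩)).ne h
  · exact Finset.filter_subset_filter _ (Finset.Icc_subset_Icc le_rfl (by omega))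
  · exact Finset.mem_filter.2 ⟨Finset.mem_Icc.2 ⟨by omega, hcy⟩, hc⟩
  · exact fun hcx => absurd (Finset.mem_Icc.1 (Finset.mem_filter.1 hcx).1).2 (by omega)

/-- A family of disjoint paths joining the cycle `f` to the cycle `g`, both of length `ℓ`: the path
of index `t` starts at time `left t` on `f`, ends at time `right t` on `g`, and has the list
`path t` of interior vertices. The two cycles may meet, but not in an end of a path. -/
structure PathSystem (G : SimpleGraph V) (ℓ : ℕ) (f g : ℤ → V) (ι : Type*) where
  left : ι → ℤ
  right : ι → ℤ
  path : ι → List V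
  isCycleParam_left : IsCycleParam G ℓ f
  isCycleParam_right : IsCycleParam G ℓ g
  left_mem : ∀ t, left t ∈ Set.Ico 0 (ℓ : ℤ)
  right_mem : ∀ t, right t ∈ Set.Ico 0 (ℓ : ℤ)
  isRoute : ∀ t, IsRoute G (f (left t)) (path t) (g (right t))
  isOffCycle_left : ∀ t, IsOffCycle f (path t)
  isOffCycle_right : ∀ t, IsOffCycle g (path t)
  left_notMem : ∀ t, f (left t) ∉ Set.range g
  right_notMem : ∀ t, g (right t) ∉ Set.range f
  disjoint : Pairwise fun t t' => (path t).Disjoint (path t')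
  left_injective : Function.Injective left
  right_injective : Function.Injective right

namespace PathSystem

/-- The same paths, traversed from `g` to `f`. -/
def symm (S : PathSystem G ℓ f g ι) : PathSystem G ℓ g f ι where
  left := S.right
  right := S.left
  path t := (S.path t).reverse
  isCycleParam_left := S.isCycleParam_right
  isCycleParam_right := S.isCycleParam_left
  left_mem := S.right_mem
  right_mem := S.left_mem
  isRoute t := (S.isRoute t).symm
  isOffCycle_left t := (S.isOffCycle_right t).perm (List.reverse_perm _).symm
  isOffCycle_right t := (S.isOffCycle_left t).perm (List.reverse_perm _).symm
  left_notMem := S.right_notMem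
  right_notMem := S.left_notMem
  disjoint t t' h := by simpa [List.Disjoint] using S.disjoint h
  left_injective := S.right_injective
  right_injective := S.left_injective

/-- The number of the segment of `f` in which path `t` starts. -/
noncomputable def leftSegment (S : PathSystem G ℓ f g ι) (t : ι) : ℕ := segment f g (S.left t)

/-- The number of the segment of `g` in which path `t` ends. -/
noncomputable def rightSegment (S : PathSystem G ℓ f g ι) (t : ι) : ℕ := segment g f (S.right t)

/-- The number of edges of path `t`. -/
def pathLength (S : PathSystem G ℓ f g ι) (t : ι) : ℕ := (S.path t).length + 1

theorem symm_left (S : PathSystem G ℓ f g ι) : S.symm.left = S.right := rfl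

theorem symm_right (S : PathSystem G ℓ f g ι) : S.symm.right = S.left := rfl

theorem symm_leftSegment (S : PathSystem G ℓ f g ι) : S.symm.leftSegment = S.rightSegment := rfl

theorem symm_rightSegment (S : PathSystem G ℓ f g ι) : S.symm.rightSegment = S.leftSegment := rfl

theorem pathLength_symm (S : PathSystem G ℓ f g ι) (t : ι) :
    S.symm.pathLength t = S.pathLength t :=
  congrArg (· + 1) List.length_reverse

theorem pathLength_pos (S : PathSystem G ℓ f g ι) (t : ι) : 0 < S.pathLength t :=
  Nat.succ_pos _

/-- `Q` lists the interior vertices of a walk from one point of the cycle `f` to another which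
follows path `t` of the system, then a part of the cycle `g`, and then path `t'` backwards, without
meeting the cycle `f` in between. -/
structure IsDetour (S : PathSystem G ℓ f g ι) (t t' : ι) (Q : List V) : Prop where
  isRoute : IsRoute G (f (S.left t)) Q (f (S.left t'))
  isOffCycle : IsOffCycle f Q
  length_add_one_eq :
    Q.length + 1 = S.pathLength t + S.pathLength t' + (S.right t - S.right t').natAbs
  mem : ∀ v ∈ Q, v ∈ S.path t ∨ v ∈ S.path t' ∨ ∃ c ∈ Set.uIcc (S.right t) (S.right t'), g c = v

variable {S : PathSystem G ℓ f g ι} {t t' u u' : ι} {Q Q' : List V}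

theorem IsDetour.symm (h : S.IsDetour t t' Q) : S.IsDetour t' t Q.reverse where
  isRoute := h.isRoute.symm
  isOffCycle := h.isOffCycle.perm (List.reverse_perm Q).symm
  length_add_one_eq := by
    rw [List.length_reverse, h.length_add_one_eq]
    omega
  mem v hv := by
    rw [Set.uIcc_comm, or_left_comm]
    exact h.mem v (List.mem_reverse.1 hv)

theorem IsDetour.ne_nil (h : S.IsDetour t t' Q) : Q ≠ [] := by
  have := h.length_add_one_eq
  have := S.pathLength_pos t
  have := S.pathLength_pos t'
  rw [← List.length_pos_iff]
  omega

theorem isOffCycle_map_int_range (S : PathSystem G ℓ f g ι)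
    (hseg : S.rightSegment t = S.rightSegment t') :
    IsOffCycle f ((Int.range (S.right t) (S.right t' + 1)).map g) := by
  have ht := S.right_mem t
  have ht' := S.right_mem t'
  simp only [Set.mem_Ico] at ht ht'
  refine ⟨S.isCycleParam_right.nodup_map (nodup_int_range _ _) (S.right t) ?_, fun v hv => ?_⟩
  · simp only [Int.mem_range_iff]
    omega
  · obtain ⟨c, hc, rfl⟩ := List.mem_map.1 hv
    rw [Int.mem_range_iff] at hc
    rcases hc.1.eq_or_lt with rfl | hlt
    · exact S.right_notMem t
    · exact notMem_range_of_segment_eq hseg ht.1 hlt (by omega)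

theorem exists_isDetour_of_lt (hlt : S.right t < S.right t')
    (hseg : S.rightSegment t = S.rightSegment t') : ∃ Q, S.IsDetour t t' Q := by
  classical
  have hne : t ≠ t' := fun h => hlt.ne (congrArg _ h)
  let A := (Int.range (S.right t) (S.right t' + 1)).map g
  have hroute := (S.isRoute t).trans
    ((S.isCycleParam_right.isRoute hlt).trans (S.isRoute t').symm)
  have hperm : (A ++ (S.path t ++ S.path t')).Perm (S.path t ++ g (S.right t) ::
      ((Int.range (S.right t + 1) (S.right t')).map g ++
        g (S.right t') :: (S.path t').reverse)) := by
    simp only [A, int_range_add_one hlt, List.perm_iff_count]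
    intro v
    simp only [List.count_cons, List.count_append, List.count_reverse, beq_iff_eq,
      List.cons_append, List.append_assoc, List.nil_append, List.map_cons, List.map_append,
      List.map_nil]
    omega
  have hA : ∀ v ∈ A, v ∉ S.path t ++ S.path t' := fun v hv hv' => by
    obtain ⟨c, -, rfl⟩ := List.mem_map.1 hv
    rcases List.mem_append.1 hv' with h | h
    exacts [(S.isOffCycle_right t).2 _ h ⟨c, rfl⟩, (S.isOffCycle_right t').2 _ h ⟨c, rfl⟩]
  refine ⟨_, hroute, IsOffCycle.perm ?_ hperm, ?_, fun v hv => ?_⟩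
  · exact (S.isOffCycle_map_int_range hseg).append
      ((S.isOffCycle_left t).append (S.isOffCycle_left t') (S.disjoint hne)) hA
  · rw [← hperm.length_eq]
    simp only [A, List.length_append, List.length_map, length_int_range, pathLength]
    omega
  · rw [← hperm.mem_iff, List.mem_append, List.mem_append, or_comm, or_assoc] at hv
    refine hv.imp_right (Or.imp_right fun hv => ?_)
    obtain ⟨c, hc, rfl⟩ := List.mem_map.1 hv
    rw [Int.mem_range_iff] at hc
    exact ⟨c, Set.mem_uIcc.2 (Or.inl (by omega)), rfl⟩

theorem exists_isDetour (hne : t ≠ t')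
    (hseg : S.rightSegment t = S.rightSegment t') : ∃ Q, S.IsDetour t t' Q := by
  rcases lt_or_gt_of_ne (S.right_injective.ne hne) with hlt | hlt
  · exact exists_isDetour_of_lt hlt hseg
  · obtain ⟨Q, hQ⟩ := exists_isDetour_of_lt hlt hseg.symm
    exact ⟨Q.reverse, hQ.symm⟩

theorem segment_eq_of_mem_uIcc (hxy : segment f g x = segment f g y) (hc : c ∈ Set.uIcc x y) :
    segment f g c = segment f g x := by
  rcases Set.mem_uIcc.1 hc with ⟨h, h'⟩ | ⟨h, h'⟩
  · exact le_antisymm (hxy ▸ segment_mono f g h') (segment_mono f g h)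
  · exact le_antisymm (segment_mono f g h') (hxy ▸ segment_mono f g h)

theorem IsDetour.disjoint (hQ : S.IsDetour t t' Q) (hQ' : S.IsDetour u u' Q')
    (ht : S.rightSegment t = S.rightSegment t')
    (hu : S.rightSegment u = S.rightSegment u')
    (htu : S.rightSegment t ≠ S.rightSegment u) : Q.Disjoint Q' := by
  have hmem {t t' : ι} {c : ℤ}
      (hc : c ∈ Set.uIcc (S.right t) (S.right t')) : c ∈ Set.Ico 0 (ℓ : ℤ) :=
    Set.ordConnected_Ico.uIcc_subset (S.right_mem _) (S.right_mem _) hc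
  have hpath {t u : ι} (h : S.rightSegment t ≠ S.rightSegment u) :
      (S.path t).Disjoint (S.path u) := S.disjoint fun e => h (congrArg _ e)
  intro v hv hv'
  rcases hQ.mem v hv with hv | hv | ⟨c, hc, rfl⟩
  all_goals rcases hQ'.mem _ hv' with hv' | hv' | ⟨c', hc', he⟩
  · exact hpath htu hv hv'
  · exact hpath (hu ▸ htu) hv hv'
  · exact (S.isOffCycle_right _).2 _ hv ⟨c', he⟩
  · exact hpath (ht ▸ htu) hv hv'
  · exact hpath (ht ▸ hu ▸ htu) hv hv'
  · exact (S.isOffCycle_right _).2 _ hv ⟨c', he⟩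
  · exact (S.isOffCycle_right _).2 _ hv' ⟨c, rfl⟩
  · exact (S.isOffCycle_right _).2 _ hv' ⟨c, rfl⟩
  · have h₁ := hmem hc
    have h₂ := hmem hc'
    simp only [Set.mem_Ico] at h₁ h₂
    obtain rfl := S.isCycleParam_right.eq_of_map_eq he (by omega)
    exact htu ((segment_eq_of_mem_uIcc ht hc).symm.trans (segment_eq_of_mem_uIcc hu hc'))

theorem pathLength_add_le (S : PathSystem G ℓ f g ι) (hG : CycleLengthLE G ℓ) (hne : t ≠ t')
    (hseg : S.rightSegment t = S.rightSegment t') :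
    S.pathLength t + S.pathLength t' + (S.right t - S.right t').natAbs ≤
      (S.left t - S.left t').natAbs := by
  wlog hlt : S.left t < S.left t' generalizing t t'
  · have := this hne.symm hseg.symm ((S.left_injective.ne hne.symm).lt_of_le (not_lt.1 hlt))
    omega
  obtain ⟨Q, hQ⟩ := S.exists_isDetour hne hseg
  have ht := S.left_mem t
  have ht' := S.left_mem t'
  simp only [Set.mem_Ico] at ht ht'
  have := S.isCycleParam_left.length_chord_le hG hlt (by omega) hQ.isRoute hQ.isOffCycle hQ.ne_nil
  have := hQ.length_add_one_eq
  omega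

theorem eq_of_segment_eq (S : PathSystem G ℓ f g ι) (hG : CycleLengthLE G ℓ)
    (hl : S.leftSegment t = S.leftSegment t') (hr : S.rightSegment t = S.rightSegment t') :
    t = t' := by
  by_contra hne
  have h := S.pathLength_add_le hG hne hr
  have h' := S.symm.pathLength_add_le hG hne hl
  simp only [pathLength_symm, symm_left, symm_right] at h'
  have := S.pathLength_pos t
  omega

variable {t₁ t₂ t₃ t₄ t₅ t₆ : ι}

theorem sum_pathLength_add_le_of_square (S : PathSystem G ℓ f g ι) (hG : CycleLengthLE G ℓ)
    (hl₁₂ : S.leftSegment t₁ = S.leftSegment t₂) (hl₃₄ : S.leftSegment t₃ = S.leftSegment t₄)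
    (hr₁₃ : S.rightSegment t₁ = S.rightSegment t₃) (hr₂₄ : S.rightSegment t₂ = S.rightSegment t₄)
    (hl : S.leftSegment t₁ ≠ S.leftSegment t₃) (hr : S.rightSegment t₁ ≠ S.rightSegment t₂)
    (horder : S.left t₁ < S.left t₂ ↔ S.left t₃ < S.left t₄) :
    S.pathLength t₁ + S.pathLength t₂ + S.pathLength t₃ + S.pathLength t₄ +
        (S.right t₁ - S.right t₃).natAbs + (S.right t₂ - S.right t₄).natAbs ≤
      (S.left t₁ - S.left t₂).natAbs + (S.left t₃ - S.left t₄).natAbs := by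
  obtain ⟨Q, hQ⟩ := S.exists_isDetour (fun h => hl (congrArg _ h)) hr₁₃
  obtain ⟨Q', hQ'⟩ := S.exists_isDetour (t := t₂) (t' := t₄)
    (fun h => hl (hl₁₂.trans ((congrArg _ h).trans hl₃₄.symm))) hr₂₄
  have hne₁₂ : t₁ ≠ t₂ := fun h => hr (congrArg _ h)
  have hne₃₄ : t₃ ≠ t₄ := fun h => hr (hr₁₃.trans ((congrArg _ h).trans hr₂₄.symm))
  have hsep : max (S.left t₁) (S.left t₂) < min (S.left t₃) (S.left t₄) ∨
      max (S.left t₃) (S.left t₄) < min (S.left t₁) (S.left t₂) :=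
    hl.lt_or_gt.imp (max_lt_min_of_segment_lt hl₁₂ hl₃₄) (max_lt_min_of_segment_lt hl₃₄ hl₁₂)
  have := S.isCycleParam_left.length_two_chords_le hG ⟨S.left_mem t₁, S.left_mem t₂⟩
    ⟨S.left_mem t₃, S.left_mem t₄⟩ (S.left_injective.ne hne₁₂) (S.left_injective.ne hne₃₄) hsep
    horder hQ.isRoute hQ'.isRoute
    (hQ.isOffCycle.append hQ'.isOffCycle (hQ.disjoint hQ' hr₁₃ hr₂₄ hr))
  have := hQ.length_add_one_eq
  have := hQ'.length_add_one_eq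
  omega

theorem sum_pathLength_add_le_of_hexagon (S : PathSystem G ℓ f g ι) (hG : CycleLengthLE G ℓ)
    (hl₁₂ : S.leftSegment t₁ = S.leftSegment t₂) (hl₃₄ : S.leftSegment t₃ = S.leftSegment t₄)
    (hl₅₆ : S.leftSegment t₅ = S.leftSegment t₆) (hr₁₃ : S.rightSegment t₁ = S.rightSegment t₃)
    (hr₂₅ : S.rightSegment t₂ = S.rightSegment t₅) (hr₄₆ : S.rightSegment t₄ = S.rightSegment t₆)
    (hl₁₃ : S.leftSegment t₁ ≠ S.leftSegment t₃) (hl₁₅ : S.leftSegment t₁ ≠ S.leftSegment t₅)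
    (hl₃₅ : S.leftSegment t₃ ≠ S.leftSegment t₅) (hr₄₁ : S.rightSegment t₄ ≠ S.rightSegment t₁)
    (hr₄₂ : S.rightSegment t₄ ≠ S.rightSegment t₂) (hr₁₂ : S.rightSegment t₁ ≠ S.rightSegment t₂)
    (hside : S.leftSegment t₃ < S.leftSegment t₁ ↔ S.leftSegment t₅ < S.leftSegment t₁)
    (horder : S.left t₁ < S.left t₂ ↔ S.leftSegment t₃ < S.leftSegment t₅)
    (horder' : S.left t₃ < S.left t₄ ↔ S.left t₅ < S.left t₆) :
    S.pathLength t₁ + S.pathLength t₂ + S.pathLength t₃ + S.pathLength t₄ + S.pathLength t₅ +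
        S.pathLength t₆ + (S.right t₁ - S.right t₃).natAbs + (S.right t₂ - S.right t₅).natAbs +
        (S.right t₄ - S.right t₆).natAbs ≤
      (S.left t₁ - S.left t₂).natAbs + (S.left t₃ - S.left t₄).natAbs +
        (S.left t₅ - S.left t₆).natAbs := by
  have hne {t t' : ι} {s : ι → ℕ} (h : s t ≠ s t') : t ≠ t' := fun e => h (congrArg s e)
  have hltl₁₂ := S.left_injective.ne (hne hr₁₂)
  obtain ⟨Q, hQ⟩ := S.exists_isDetour (hne hl₁₃) hr₁₃
  obtain ⟨Q', hQ'⟩ := S.exists_isDetour (hne (hl₁₂ ▸ hl₁₅)) hr₂₅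
  obtain ⟨W, hW⟩ := S.exists_isDetour (hne (hl₃₄ ▸ hl₅₆ ▸ hl₃₅)) hr₄₆
  have hoff : IsOffCycle f (Q ++ Q' ++ W) :=
    (hQ.isOffCycle.append hQ'.isOffCycle (hQ.disjoint hQ' hr₁₃ hr₂₅ hr₁₂)).append hW.isOffCycle
      (List.disjoint_append_left.2 ⟨hQ.disjoint hW hr₁₃ hr₄₆ hr₄₁.symm,
        hQ'.disjoint hW hr₂₅ hr₄₆ hr₄₂.symm⟩)
  have hblocks : max (S.left t₁) (S.left t₂) < min (S.left t₃) (S.left t₄) ∧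
        max (S.left t₁) (S.left t₂) < min (S.left t₅) (S.left t₆) ∨
      max (S.left t₃) (S.left t₄) < min (S.left t₁) (S.left t₂) ∧
        max (S.left t₅) (S.left t₆) < min (S.left t₁) (S.left t₂) := by
    rcases hl₁₃.lt_or_gt with h | h
    · exact Or.inl ⟨max_lt_min_of_segment_lt hl₁₂ hl₃₄ h,
        max_lt_min_of_segment_lt hl₁₂ hl₅₆ (hl₁₅.lt_of_le (by omega))⟩
    · exact Or.inr ⟨max_lt_min_of_segment_lt hl₃₄ hl₁₂ h,
        max_lt_min_of_segment_lt hl₅₆ hl₁₂ (hside.1 h)⟩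
  have hblocks' :
      S.left t₁ < S.left t₂ ∧ max (S.left t₃) (S.left t₄) < min (S.left t₅) (S.left t₆) ∨
      S.left t₂ < S.left t₁ ∧ max (S.left t₅) (S.left t₆) < min (S.left t₃) (S.left t₄) := by
    rcases hl₃₅.lt_or_gt with h | h
    · exact Or.inl ⟨horder.2 h, max_lt_min_of_segment_lt hl₃₄ hl₅₆ h⟩
    · exact Or.inr ⟨by omega, max_lt_min_of_segment_lt hl₅₆ hl₃₄ h⟩
  have := S.isCycleParam_left.length_three_chords_le hG ⟨S.left_mem t₁, S.left_mem t₂⟩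
    ⟨S.left_mem t₃, S.left_mem t₄⟩ ⟨S.left_mem t₅, S.left_mem t₆⟩
    (S.left_injective.ne (hne (hr₁₃ ▸ hr₄₁.symm)))
    (S.left_injective.ne (hne (hr₂₅ ▸ hr₄₆ ▸ hr₄₂.symm))) hblocks hblocks' horder'
    hQ.isRoute hQ'.isRoute hW.isRoute hoff
  have := hQ.length_add_one_eq
  have := hQ'.length_add_one_eq
  have := hW.length_add_one_eq
  omega

variable {E : Finset (ℕ × ℕ)} {ψ : ℕ → ℕ → ι}

theorem not_isCompatibleSquare (S : PathSystem G ℓ f g ι) (hG : CycleLengthLE G ℓ)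
    (hl : ∀ ⦃i j⦄, (i, j) ∈ E → S.leftSegment (ψ i j) = i)
    (hr : ∀ ⦃i j⦄, (i, j) ∈ E → S.rightSegment (ψ i j) = j) (i i' j j' : ℕ) :
    ¬IsCompatibleSquare E (fun i j => S.left (ψ i j)) (fun i j => S.right (ψ i j)) i i' j j' := by
  rintro ⟨hi, hj, e₁, e₂, e₃, e₄, hp, hq⟩
  have h := S.sum_pathLength_add_le_of_square hG ((hl e₁).trans (hl e₂).symm)
    ((hl e₃).trans (hl e₄).symm) ((hr e₁).trans (hr e₃).symm) ((hr e₂).trans (hr e₄).symm)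
    (by rwa [hl e₁, hl e₃]) (by rwa [hr e₁, hr e₂]) hp
  have h' := S.symm.sum_pathLength_add_le_of_square hG ((hr e₁).trans (hr e₃).symm)
    ((hr e₂).trans (hr e₄).symm) ((hl e₁).trans (hl e₂).symm) ((hl e₃).trans (hl e₄).symm)
    (by rwa [symm_leftSegment, hr e₁, hr e₂]) (by rwa [symm_rightSegment, hl e₁, hl e₃]) hq
  simp only [pathLength_symm, symm_left, symm_right] at h'
  have := S.pathLength_pos (ψ i j)
  omega

theorem not_isCompatibleHexagon (S : PathSystem G ℓ f g ι) (hG : CycleLengthLE G ℓ)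
    (hl : ∀ ⦃i j⦄, (i, j) ∈ E → S.leftSegment (ψ i j) = i)
    (hr : ∀ ⦃i j⦄, (i, j) ∈ E → S.rightSegment (ψ i j) = j) (z b b' w a a' : ℕ) :
    ¬IsCompatibleHexagon E (fun i j => S.left (ψ i j)) (fun i j => S.right (ψ i j))
      z b b' w a a' := by
  rintro ⟨hzb, hzb', hbb', hwa, hwa', haa', e₁, e₂, e₃, e₅, e₄, e₆, hltz, hltw, hpz, hpb, hqw, hqa⟩
  have h := S.sum_pathLength_add_le_of_hexagon hG ((hl e₁).trans (hl e₂).symm)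
    ((hl e₃).trans (hl e₄).symm) ((hl e₅).trans (hl e₆).symm) ((hr e₁).trans (hr e₃).symm)
    ((hr e₂).trans (hr e₅).symm) ((hr e₄).trans (hr e₆).symm) (by rwa [hl e₁, hl e₃])
    (by rwa [hl e₁, hl e₅]) (by rwa [hl e₃, hl e₅]) (by rwa [hr e₄, hr e₁])
    (by rwa [hr e₄, hr e₂]) (by rwa [hr e₁, hr e₂]) (by rwa [hl e₁, hl e₃, hl e₅])
    (by rwa [hl e₃, hl e₅]) hpb
  have h' := S.symm.sum_pathLength_add_le_of_hexagon hG (t₁ := ψ b w) (t₂ := ψ b' w)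
    (t₃ := ψ b a) (t₄ := ψ z a) (t₅ := ψ b' a') (t₆ := ψ z a') ((hr e₄).trans (hr e₆).symm)
    ((hr e₃).trans (hr e₁).symm) ((hr e₅).trans (hr e₂).symm) ((hl e₄).trans (hl e₃).symm)
    ((hl e₆).trans (hl e₅).symm) ((hl e₁).trans (hl e₂).symm)
    (by rwa [symm_leftSegment, hr e₄, hr e₃]) (by rwa [symm_leftSegment, hr e₄, hr e₅])
    (by rwa [symm_leftSegment, hr e₃, hr e₅]) (by rwa [symm_rightSegment, hl e₁, hl e₄])
    (by rwa [symm_rightSegment, hl e₁, hl e₆]) (by rwa [symm_rightSegment, hl e₄, hl e₆])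
    (by rwa [symm_leftSegment, hr e₃, hr e₄, hr e₅])
    (by rwa [symm_left, symm_leftSegment, hr e₃, hr e₅]) hqa
  simp only [pathLength_symm, symm_left, symm_right] at h'
  have := S.pathLength_pos (ψ z a)
  omega

theorem leftSegment_le (S : PathSystem G ℓ f g ι) (t : ι) :
    S.leftSegment t ≤ segment f g (ℓ - 1) :=
  segment_mono f g (Int.le_sub_one_of_lt (S.left_mem t).2)

theorem rightSegment_le (S : PathSystem G ℓ f g ι) (t : ι) :
    S.rightSegment t ≤ segment g f (ℓ - 1) :=
  S.symm.leftSegment_le t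

theorem card_le_one [Fintype ι] (S : PathSystem G ℓ f g ι) (hG : CycleLengthLE G ℓ)
    (hk : segment f g (ℓ - 1) = 0) (hk' : segment g f (ℓ - 1) = 0) : Fintype.card ι ≤ 1 := by
  refine Fintype.card_le_one_iff.2 fun t t' => S.eq_of_segment_eq hG ?_ ?_
  · have := S.leftSegment_le t
    have := S.leftSegment_le t'
    omega
  · have := S.rightSegment_le t
    have := S.rightSegment_le t'
    omega

/-- A path is determined by its pair of segments, so that many paths contain a compatible square
or hexagon. Rerouting the cycle `f` and the cycle `g` along it gives two cycles of total length
greater than `2 * ℓ`. -/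
theorem card_pow_five_lt [Fintype ι] (S : PathSystem G ℓ f g ι) (hG : CycleLengthLE G ℓ) {k : ℕ}
    (hk : segment f g (ℓ - 1) ≤ k) (hk' : segment g f (ℓ - 1) ≤ k) :
    Fintype.card ι ^ 5 < 2 ^ 25 * (k + 1) ^ 8 := by
  by_contra! hlarge
  have : Nonempty ι := by
    by_contra hι
    rw [not_nonempty_iff] at hι
    simp at hlarge
  let φ (t : ι) : ℕ × ℕ := (S.leftSegment t, S.rightSegment t)
  have hφ : Function.Injective φ := fun t t' h =>
    S.eq_of_segment_eq hG (congrArg Prod.fst h) (congrArg Prod.snd h)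
  let ψ (i j : ℕ) : ι := Function.invFun φ (i, j)
  have hψ {i j : ℕ} (hij : (i, j) ∈ Finset.univ.image φ) : φ (ψ i j) = (i, j) :=
    Function.invFun_eq ((Finset.mem_image.1 hij).imp fun _ h => h.2)
  have hmem : Finset.univ.image φ ⊆ Finset.range (k + 1) ×ˢ Finset.range (k + 1) :=
    Finset.image_subset_iff.2 fun t _ => Finset.mk_mem_product
      (Finset.mem_range_succ_iff.2 ((S.leftSegment_le t).trans hk))
      (Finset.mem_range_succ_iff.2 ((S.rightSegment_le t).trans hk'))
  rcases exists_square_or_hexagon k.succ_pos hmem (by simp) (by simp)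
    (by rwa [Finset.card_image_of_injective _ hφ, Finset.card_univ])
    (fun i j => S.left (ψ i j)) (fun i j => S.right (ψ i j)) with
    ⟨i, i', j, j', h⟩ | ⟨z, b, b', w, a, a', h⟩
  · exact S.not_isCompatibleSquare hG (fun i j h => congrArg Prod.fst (hψ h))
      (fun i j h => congrArg Prod.snd (hψ h)) i i' j j' h
  · exact S.not_isCompatibleHexagon hG (fun i j h => congrArg Prod.fst (hψ h))
      (fun i j h => congrArg Prod.snd (hψ h)) z b b' w a a' h

end PathSystem

end PathSystems

section Separators

variable {V : Type*} {G : SimpleGraph V} {ℓ : ℕ} {f g : ℤ → V} {A B I : Finset V} {P : V → List V}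
  {l : List V}

theorem IsConnector.exists_isRoute (h : IsConnector {e | G.Adj e.1 e.2} A B l)
    (hAB : ∀ v ∈ l, v ∈ A → v ∉ B) :
    ∃ s ∈ A, ∃ t ∈ B, ∃ L, IsRoute G s L t ∧ s :: L ++ [t] = l := by
  obtain ⟨s, hs, hl⟩ := h.head_mem
  obtain ⟨l₁, t, ht, rfl⟩ := h.exists_eq_append_singleton
  cases l₁ with
  | nil =>
    obtain rfl : t = s := by simpa using hl
    exact absurd ht (hAB t (by simp) hs)
  | cons x L =>
    obtain rfl : x = s := by simpa using hl
    exact ⟨x, hs, t, ht, L, h.isChain, rfl⟩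

theorem IsRoute.exists_nodup_of_subset {s t : V} {L : List V} (h : IsRoute G s L t) (hs : s ∈ A)
    (ht : t ∈ B) (hl : s :: L ++ [t] ⊆ l) :
    ∃ s ∈ A, ∃ t ∈ B, ∃ L, IsRoute G s L t ∧ s :: L ++ [t] ⊆ l ∧ L.Nodup ∧
      ∀ v ∈ L, v ∉ A ∧ v ∉ B := by
  obtain ⟨⟨s, L, t⟩, ⟨h, hs, ht, hl⟩, hmin⟩ := exists_minimalFor_of_wellFoundedLT
    (fun T : V × List V × V =>
      IsRoute G T.1 T.2.1 T.2.2 ∧ T.1 ∈ A ∧ T.2.2 ∈ B ∧ T.1 :: T.2.1 ++ [T.2.2] ⊆ l)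
    (fun T => T.2.1.length) ⟨(s, L, t), h, hs, ht, hl⟩
  dsimp only at h hs ht hl
  have hmin {s' L' t'} (h' : IsRoute G s' L' t') (hs' : s' ∈ A) (ht' : t' ∈ B)
      (hl' : s' :: L' ++ [t'] ⊆ s :: L ++ [t]) : ¬L'.length < L.length := fun hlt =>
    hlt.not_ge (hmin (j := (s', L', t')) ⟨h', hs', ht', fun _ hv => hl (hl' hv)⟩ hlt.le)
  refine ⟨s, hs, t, ht, L, h, hl, List.nodup_iff_sublist.2 fun x hx => ?_, fun v hv => ?_⟩
  · obtain ⟨r₁, r₂, rfl, hx₁, hx₂⟩ := List.cons_sublist_iff.1 hx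
    obtain ⟨a, b, rfl⟩ := List.append_of_mem hx₁
    obtain ⟨c, d, rfl⟩ := List.append_of_mem (List.singleton_sublist.1 hx₂)
    rw [List.append_assoc, List.cons_append, IsRoute.append_cons_iff, ← List.append_assoc,
      IsRoute.append_cons_iff] at h
    refine hmin (h.1.trans h.2.2) hs ht
      (by intro y; simp only [List.mem_append, List.mem_cons]; tauto)
      (by simp only [List.length_append, List.length_cons]; omega)
  · obtain ⟨a, b, rfl⟩ := List.append_of_mem hv
    rw [IsRoute.append_cons_iff] at h
    exact ⟨fun hvA => hmin h.2 hvA ht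
        (by intro y; simp only [List.mem_append, List.mem_cons]; tauto)
        (by simp only [List.length_append, List.length_cons]; omega),
      fun hvB => hmin h.1 hs hvB
        (by intro y; simp only [List.mem_append, List.mem_cons]; tauto) (by simp)⟩

theorem IsCycleParam.exists_mem_Ico (hf : IsCycleParam G ℓ f) {v : V} (hv : v ∈ Set.range f) :
    ∃ a ∈ Set.Ico 0 (ℓ : ℤ), f a = v := by
  obtain ⟨a, rfl⟩ := hv
  have := hf.three_le
  obtain ⟨b, hb, h⟩ := hf.periodic.exists_mem_Ico₀ (by omega) a
  exact ⟨b, hb, h.symm⟩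

theorem IsLinkage.nonempty_pathSystem (h : IsLinkage {e | G.Adj e.1 e.2} A B I P)
    (hf : IsCycleParam G ℓ f) (hg : IsCycleParam G ℓ g) (hA : (A : Set V) = Set.range f)
    (hB : (B : Set V) = Set.range g) (hAB : ∀ i ∈ I, ∀ v ∈ P i, v ∈ A → v ∉ B) :
    Nonempty (PathSystem G ℓ f g I) := by
  have hroute (i : I) : ∃ s ∈ A, ∃ t ∈ B, ∃ L, IsRoute G s L t ∧ s :: L ++ [t] ⊆ P i ∧ L.Nodup ∧
      ∀ v ∈ L, v ∉ A ∧ v ∉ B := by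
    obtain ⟨s, hs, t, ht, L, hL, hl⟩ := (h.isConnector i i.2).exists_isRoute (hAB i i.2)
    exact hL.exists_nodup_of_subset hs ht fun _ hv => hl ▸ hv
  simp only [← Finset.mem_coe, hA, hB] at hroute hAB
  choose s hs t ht L hL hLP hnodup hoff using hroute
  choose p hp hps using fun i => hf.exists_mem_Ico (hs i)
  choose q hq hqt using fun i => hg.exists_mem_Ico (ht i)
  simp only [List.append_subset, List.cons_subset] at hLP
  have hinj {i j : I} {v : V} (hi : v ∈ P i) (hj : v ∈ P j) : i = j := by
    by_contra hij
    exact h.disjoint i.2 j.2 (fun e => hij (Subtype.ext e)) hi hj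
  exact ⟨{
    left := p
    right := q
    path := L
    isCycleParam_left := hf
    isCycleParam_right := hg
    left_mem := hp
    right_mem := hq
    isRoute := fun i => by rw [hps, hqt]; exact hL i
    isOffCycle_left := fun i => ⟨hnodup i, fun v hv => (hoff i v hv).1⟩
    isOffCycle_right := fun i => ⟨hnodup i, fun v hv => (hoff i v hv).2⟩
    left_notMem := fun i => hps i ▸ hAB i i.2 _ (hLP i).1.1 (hs i)
    right_notMem := fun i hi =>
      hAB i i.2 _ (hLP i).2.1 (hqt i ▸ hi) (ht i)
    disjoint := fun i j hij v hi hj => hij (hinj ((hLP i).1.2 hi) ((hLP j).1.2 hj))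
    left_injective := fun i j hij =>
      hinj (hLP i).1.1 (by rw [← hps i, hij, hps j]; exact (hLP j).1.1)
    right_injective := fun i j hij => hinj (hLP i).2.1
      (by rw [← hqt i, hij, hqt j]; exact (hLP j).2.1) }⟩

variable [DecidableEq V]

theorem IsLinkage.exists_card_le_add {E : Set (V × V)} (h : IsLinkage E A B I P) :
    ∃ J, IsLinkage E A B J P ∧ (∀ i ∈ J, ∀ v ∈ P i, v ∈ A → v ∉ B) ∧
      I.card ≤ J.card + (A ∩ B).card := by
  let J := I.filter fun i => ∀ v ∈ P i, v ∈ A → v ∉ B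
  have hJ : J ⊆ I := Finset.filter_subset _ _
  refine ⟨J, ⟨fun i hi => h.isConnector i (hJ hi), h.disjoint.mono (Finset.coe_subset.2 hJ)⟩,
    fun i hi => (Finset.mem_filter.1 hi).2, ?_⟩
  rw [← Finset.card_filter_add_card_filter_not (s := I) fun i => ∀ v ∈ P i, v ∈ A → v ∉ B]
  refine Nat.add_le_add_left ?_ _
  have hmeet : ∀ i ∈ I.filter fun i => ¬∀ v ∈ P i, v ∈ A → v ∉ B, ∃ v ∈ A ∩ B, v ∈ P i := by
    intro i hi
    simpa [and_comm, and_assoc] using (Finset.mem_filter.1 hi).2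
  choose! w hw hwP using hmeet
  refine Finset.card_le_card_of_injOn w hw fun i hi j hj hij => ?_
  by_contra hne
  exact h.disjoint (Finset.mem_filter.1 hi).1 (Finset.mem_filter.1 hj).1 hne (hwP i hi)
    (hij ▸ hwP j hj)

theorem IsCycleParam.segment_le_card_inter (hf : IsCycleParam G ℓ f)
    (hA : (A : Set V) = Set.range f) (hB : (B : Set V) = Set.range g) :
    segment f g (ℓ - 1) ≤ (A ∩ B).card := by
  classical
  refine Finset.card_le_card_of_injOn f (fun c hc => ?_) fun c hc d hd hcd => ?_
  · rw [Finset.mem_coe, Finset.mem_inter, ← Finset.mem_coe, ← Finset.mem_coe, hA, hB]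
    exact ⟨⟨c, rfl⟩, (Finset.mem_filter.1 hc).2⟩
  · have := Finset.mem_Icc.1 (Finset.mem_filter.1 hc).1
    have := Finset.mem_Icc.1 (Finset.mem_filter.1 hd).1
    exact hf.eq_of_map_eq hcd (by omega)

variable [Finite V]

/-- The number `m` counts those paths of a linkage from `A` to `B` which do not meet `A ∩ B`. -/
theorem exists_separates_card_le_add (hf : IsCycleParam G ℓ f) (hg : IsCycleParam G ℓ g)
    (hG : CycleLengthLE G ℓ) (hA : (A : Set V) = Set.range f) (hB : (B : Set V) = Set.range g) :
    ∃ (S : Finset V) (m : ℕ), Separates {e | G.Adj e.1 e.2} A B S ∧ S.card ≤ m + (A ∩ B).card ∧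
      m ^ 5 < 2 ^ 25 * ((A ∩ B).card + 1) ^ 8 ∧ ((A ∩ B).card = 0 → m ≤ 1) := by
  obtain ⟨S, I, P, hS, hP, hcard⟩ :=
    exists_separates_isLinkage (Set.toFinite {e : V × V | G.Adj e.1 e.2}) A B
  obtain ⟨J, hJ, hAB, hIJ⟩ := hP.exists_card_le_add
  obtain ⟨T⟩ := hJ.nonempty_pathSystem hf hg hA hB hAB
  have hk := hf.segment_le_card_inter hA hB
  have hk' := hg.segment_le_card_inter hB hA
  rw [Finset.inter_comm] at hk'
  refine ⟨S, J.card, hS, hcard.trans hIJ, ?_, fun h => ?_⟩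
  · simpa using T.card_pow_five_lt hG hk hk'
  · simpa using T.card_le_one hG (by omega) (by omega)

end Separators

section Averaging

open scoped Pointwise

variable {Γ V : Type*} [Group Γ] [MulAction Γ V] [MulAction.IsPretransitive Γ V]
  [DecidableEq V]

theorem card_mul_card_filter_smul_eq [Fintype Γ] [Fintype V] (x y : V) :
    Fintype.card V * (Finset.univ.filter fun g : Γ => g • x = y).card = Fintype.card Γ := by
  have hfiber (z : V) : (Finset.univ.filter fun g : Γ => g • x = z).card =
      (Finset.univ.filter fun g : Γ => g • x = y).card := by
    obtain ⟨h, rfl⟩ := MulAction.exists_smul_eq Γ z y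
    exact Finset.card_equiv (Equiv.mulLeft h) (by simp [mul_smul])
  have hsum := Finset.card_eq_sum_card_fiberwise (s := Finset.univ) (t := Finset.univ)
    (f := fun g : Γ => g • x) fun g _ => Finset.mem_coe.2 (Finset.mem_univ (g • x))
  simpa only [hfiber, Finset.sum_const, Finset.card_univ, smul_eq_mul] using hsum.symm

theorem card_mul_sum_card_inter_smul [Fintype Γ] [Fintype V] (A B : Finset V) :
    Fintype.card V * ∑ g : Γ, (A ∩ g • B).card = Fintype.card Γ * (A.card * B.card) := by
  have hinter (g : Γ) :
      (A ∩ g • B).card = ((A ×ˢ B).bipartiteAbove (fun g p => g • p.2 = p.1) g).card := by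
    refine (Finset.card_nbij Prod.fst ?_ ?_ ?_).symm
    · rintro ⟨a, b⟩ hp
      obtain ⟨hp, hab : g • b = a⟩ := Finset.mem_filter.1 hp
      obtain ⟨ha, hb⟩ := Finset.mem_product.1 hp
      exact Finset.mem_inter.2 ⟨ha, hab ▸ Finset.smul_mem_smul_finset hb⟩
    · rintro ⟨a, b⟩ hp ⟨a', b'⟩ hq (rfl : a = a')
      have hab : g • b = a := (Finset.mem_filter.1 hp).2
      have hab' : g • b' = a := (Finset.mem_filter.1 hq).2
      rw [smul_left_cancel g (hab.trans hab'.symm)]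
    · intro a ha
      obtain ⟨ha, hag⟩ := Finset.mem_inter.1 ha
      obtain ⟨b, hb, rfl⟩ := Finset.mem_smul_finset.1 hag
      exact ⟨(g • b, b), Finset.mem_filter.2 ⟨Finset.mem_product.2 ⟨ha, hb⟩, rfl⟩, rfl⟩
  simp only [hinter, Finset.sum_card_bipartiteAbove_eq_sum_card_bipartiteBelow,
    Finset.bipartiteBelow, Finset.mul_sum, card_mul_card_filter_smul_eq, Finset.sum_const,
    smul_eq_mul, Finset.card_product]
  ring

variable (Γ) [Finite Γ]

theorem exists_card_mul_card_inter_smul_le [Fintype V] (A B : Finset V) :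
    ∃ g : Γ, Fintype.card V * (A ∩ g • B).card ≤ A.card * B.card := by
  have := Fintype.ofFinite Γ
  obtain ⟨g, -, hg⟩ := Finset.exists_le_of_sum_le (s := Finset.univ)
    (f := fun g : Γ => Fintype.card V * (A ∩ g • B).card) (g := fun _ => A.card * B.card)
    Finset.univ_nonempty
    (by rw [← Finset.mul_sum, card_mul_sum_card_inter_smul, Finset.sum_const, Finset.card_univ,
      smul_eq_mul])
  exact ⟨g, hg⟩

theorem exists_smul_mem_inter_smul_eq_empty [Finite V] (x : V) {A B C : Finset V}
    (h : A.card * B.card < C.card) : ∃ g : Γ, g • x ∈ C ∧ A ∩ g • B = ∅ := by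
  have := Fintype.ofFinite Γ
  have := Fintype.ofFinite V
  have hsum : ∑ g : Γ, (A ∩ g • B).card < ∑ g : Γ, (C ∩ g • ({x} : Finset V)).card := by
    refine lt_of_mul_lt_mul_left (a := Fintype.card V) ?_ (Nat.zero_le _)
    rw [card_mul_sum_card_inter_smul, card_mul_sum_card_inter_smul, Finset.card_singleton, mul_one]
    exact Nat.mul_lt_mul_of_pos_left h Fintype.card_pos
  obtain ⟨g, -, hg⟩ := Finset.exists_lt_of_sum_lt hsum
  rw [Finset.smul_finset_singleton] at hg
  obtain ⟨y, hy⟩ := Finset.card_pos.1 (Nat.zero_lt_of_lt hg)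
  obtain ⟨hyC, hy⟩ := Finset.mem_inter.1 hy
  have := hg.trans_le ((Finset.card_le_card Finset.inter_subset_right).trans_eq
    (Finset.card_singleton _))
  exact ⟨g, Finset.mem_singleton.1 hy ▸ hyC, Finset.card_eq_zero.1 (Nat.lt_one_iff.1 this)⟩

end Averaging

section Separations

open scoped Pointwise

variable {V : Type*} {G : SimpleGraph V} {A B C P P' Q Q' S : Finset V} {x y : V}

/-- A separation of `G`: every vertex lies in `P` or in `Q`, and no edge joins `P \ Q` to `Q \ P`.
The cardinality of `P ∩ Q` is its order. -/
structure IsSeparation (G : SimpleGraph V) (P Q : Finset V) : Prop where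
  cover : ∀ v, v ∈ P ∨ v ∈ Q
  not_adj : ∀ ⦃u v⦄, u ∉ Q → v ∉ P → ¬G.Adj u v

theorem preconnected_induce_smul [DecidableEq V] (hC : (G.induce (C : Set V)).Preconnected)
    (φ : G ≃g G) : (G.induce ((φ • C : Finset V) : Set V)).Preconnected := by
  rw [Finset.coe_smul_finset]
  exact (φ.induce φ.injective.injOn.bijOn_image).preconnected_iff.1 hC

namespace IsSeparation

theorem symm (h : IsSeparation G P Q) : IsSeparation G Q P :=
  ⟨fun v => (h.cover v).symm, fun _ _ hu hv huv => h.not_adj hv hu huv.symm⟩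

variable [DecidableEq V]

theorem inter (h : IsSeparation G P Q) (h' : IsSeparation G P' Q') :
    IsSeparation G (P ∩ P') (Q ∪ Q') := by
  refine ⟨fun v => ?_, fun u v hu hv => ?_⟩
  · rw [Finset.mem_inter, Finset.mem_union]
    have := h.cover v
    have := h'.cover v
    tauto
  · rw [Finset.mem_union, not_or] at hu
    rw [Finset.mem_inter, not_and_or] at hv
    exact hv.elim (h.not_adj hu.1) (h'.not_adj hu.2)

theorem union (h : IsSeparation G P Q) (h' : IsSeparation G P' Q') :
    IsSeparation G (P ∪ P') (Q ∩ Q') :=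
  (h.symm.inter h'.symm).symm

theorem smul (h : IsSeparation G P Q) (φ : G ≃g G) : IsSeparation G (φ • P) (φ • Q) := by
  refine ⟨fun v => ?_, fun u v hu hv huv => ?_⟩
  · simpa only [← Finset.inv_smul_mem_iff] using h.cover (φ⁻¹ • v)
  · rw [← Finset.inv_smul_mem_iff] at hu hv
    exact h.not_adj hu hv (φ⁻¹.map_adj_iff.2 huv)

theorem subset_sdiff (h : IsSeparation G P Q) (hC : (G.induce (C : Set V)).Preconnected)
    (hPQ : P ∩ Q ∩ C = ∅) (hxC : x ∈ C) (hxP : x ∈ P) : C ⊆ P \ Q := by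
  have hnot {v : V} (hv : v ∈ C) (hvP : v ∈ P) : v ∉ Q := fun hvQ =>
    Finset.notMem_empty v (hPQ ▸ Finset.mem_inter.2 ⟨Finset.mem_inter.2 ⟨hvP, hvQ⟩, hv⟩)
  suffices hP : C ⊆ P from fun v hv => Finset.mem_sdiff.2 ⟨hP hv, hnot hv (hP hv)⟩
  intro v hv
  obtain ⟨p⟩ := hC ⟨x, hxC⟩ ⟨v, hv⟩
  suffices h' : ∀ {a b : (C : Set V)} (_ : (G.induce (C : Set V)).Walk a b),
      (a : V) ∈ P → (b : V) ∈ P from h' p hxP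
  intro a b p ha
  induction p with
  | nil => exact ha
  | @cons a b _ hab _ ih =>
    by_contra hb
    exact h.not_adj (hnot a.2 ha) (fun hbP => hb (ih hbP)) hab

theorem card_sdiff_add_card [Fintype V] (h : IsSeparation G P Q) :
    (Q \ P).card + P.card = Fintype.card V := by
  rw [Finset.card_sdiff_add_card, Finset.union_comm, ← Finset.card_univ]
  exact congrArg _ (Finset.eq_univ_iff_forall.2 fun v => Finset.mem_union.2 (h.cover v))

theorem exists_smul_subset_sdiff [Finite V] [MulAction.IsPretransitive (G ≃g G) V]
    (h : IsSeparation G P Q) (hne : C.Nonempty) (hC : (G.induce (C : Set V)).Preconnected)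
    (hlt : (P ∩ Q).card * C.card < (P \ Q).card) : ∃ φ : G ≃g G, φ • C ⊆ P \ Q := by
  have := DFunLike.finite (G ≃g G)
  obtain ⟨x, hx⟩ := hne
  obtain ⟨φ, hφ, hPQ⟩ := exists_smul_mem_inter_smul_eq_empty (G ≃g G) x hlt
  exact ⟨φ, h.subset_sdiff (preconnected_induce_smul hC φ) hPQ (Finset.smul_mem_smul_finset hx)
    (Finset.mem_sdiff.1 hφ).1⟩

theorem card_sdiff_le [Finite V] [MulAction.IsPretransitive (G ≃g G) V] (h : IsSeparation G P Q)
    (hC : (G.induce (C : Set V)).Preconnected) (hint : ∀ φ : G ≃g G, (C ∩ φ • C).Nonempty)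
    (hlt : (P ∩ Q).card * C.card < (Q \ P).card) : (P \ Q).card ≤ (P ∩ Q).card * C.card := by
  have hne : C.Nonempty := (hint 1).mono Finset.inter_subset_left
  by_contra! hlt'
  obtain ⟨φ, hφ⟩ := h.exists_smul_subset_sdiff hne hC hlt'
  obtain ⟨ψ, hψ⟩ := h.symm.exists_smul_subset_sdiff hne hC (by rwa [Finset.inter_comm])
  obtain ⟨v, hv⟩ := hint (φ⁻¹ * ψ)
  rw [Finset.mem_inter, mul_smul, ← Finset.inv_smul_mem_iff, inv_inv] at hv
  have hvP := hφ (Finset.smul_mem_smul_finset hv.1)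
  have hvQ := hψ hv.2
  exact (Finset.mem_sdiff.1 hvP).2 (Finset.mem_sdiff.1 hvQ).1

end IsSeparation

theorem card_inter_add_card_union_le [DecidableEq V] (P P' Q Q' : Finset V) :
    ((P ∩ P') ∩ (Q ∪ Q')).card + ((P ∪ P') ∩ (Q ∩ Q')).card ≤
      (P ∩ Q).card + (P' ∩ Q').card := by
  rw [← Finset.card_union_add_card_inter, ← Finset.card_union_add_card_inter (P ∩ Q)]
  refine Nat.add_le_add (Finset.card_le_card fun v => ?_) (Finset.card_le_card fun v => ?_)
  all_goals
    simp only [Finset.mem_union, Finset.mem_inter]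
    tauto

variable [Fintype V] [DecidableEq V]

/-- A separation whose order is small compared with `C` and whose side `P`, containing `C`, has at
most half of the vertices. No such separation exists if `C` is connected and meets all its
translates. -/
structure IsAdmissible (G : SimpleGraph V) (C P Q : Finset V) : Prop where
  isSeparation : IsSeparation G P Q
  subset : C ⊆ P
  two_mul_card_le : 2 * P.card ≤ Fintype.card V
  card_mul_lt : 8 * (C.card * (P ∩ Q).card) < Fintype.card V

variable [MulAction.IsPretransitive (G ≃g G) V]

namespace IsAdmissible

theorem four_mul_card_lt (h : IsAdmissible G C P Q) (hC : (G.induce (C : Set V)).Preconnected)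
    (hint : ∀ φ : G ≃g G, (C ∩ φ • C).Nonempty) : 4 * P.card < Fintype.card V := by
  have hne : 0 < C.card := Finset.card_pos.2 ((hint 1).mono Finset.inter_subset_left)
  have hlt := h.card_mul_lt
  rw [mul_comm C.card] at hlt
  have hle : (P ∩ Q).card ≤ (P ∩ Q).card * C.card := Nat.le_mul_of_pos_right _ hne
  have hP := Finset.card_sdiff_add_card_inter P Q
  have hQ := h.isSeparation.card_sdiff_add_card
  have hhalf := h.two_mul_card_le
  have hsmall := h.isSeparation.card_sdiff_le hC hint (by omega)
  omega

theorem exists_subset_smul (h : IsAdmissible G C P Q) (hC : (G.induce (C : Set V)).Preconnected)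
    (hint : ∀ φ : G ≃g G, (C ∩ φ • C).Nonempty) : ∃ φ : G ≃g G, C ⊆ φ • P ∧ ¬φ • P ⊆ P := by
  have := DFunLike.finite (G ≃g G)
  obtain ⟨x, hx⟩ := (hint 1).mono Finset.inter_subset_left
  obtain ⟨φ, hφ, hPQ⟩ := exists_smul_mem_inter_smul_eq_empty (G ≃g G) x (A := C) (B := P ∩ Q)
    (C := Pᶜ) (by
      have := h.two_mul_card_le
      have := h.card_mul_lt
      rw [Finset.card_compl]
      omega)
  obtain ⟨v, hv⟩ := hint φ
  obtain ⟨hvC, hvφ⟩ := Finset.mem_inter.1 hv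
  rw [Finset.inter_comm, Finset.smul_finset_inter] at hPQ
  refine ⟨φ, ((h.isSeparation.smul φ).subset_sdiff hC hPQ hvC
    (Finset.smul_finset_subset_smul_finset h.subset hvφ)).trans Finset.sdiff_subset, fun hφP => ?_⟩
  exact Finset.mem_compl.1 hφ (hφP (Finset.smul_mem_smul_finset (h.subset hx)))

/-- Uncrossing with a translate: the new side is `P ∩ φ • P` or `P ∪ φ • P`. -/
theorem exists_improvement (h : IsAdmissible G C P Q)
    (hC : (G.induce (C : Set V)).Preconnected) (hint : ∀ φ : G ≃g G, (C ∩ φ • C).Nonempty) :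
    ∃ P' Q', IsAdmissible G C P' Q' ∧ ((P' ∩ Q').card < (P ∩ Q).card ∨
      (P' ∩ Q').card ≤ (P ∩ Q).card ∧ P.card < P'.card) := by
  have hfour := h.four_mul_card_lt hC hint
  obtain ⟨φ, hCφ, hφP⟩ := h.exists_subset_smul hC hint
  have hlt {k : ℕ} (hk : k ≤ (P ∩ Q).card) : 8 * (C.card * k) < Fintype.card V :=
    lt_of_le_of_lt (by gcongr) h.card_mul_lt
  have hsub := card_inter_add_card_union_le P (φ • P) Q (φ • Q)
  rw [← Finset.smul_finset_inter, Finset.card_smul_finset] at hsub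
  have hsmul := h.isSeparation.smul φ
  by_cases hcase : ((P ∩ φ • P) ∩ (Q ∪ φ • Q)).card < (P ∩ Q).card
  · have hle := Finset.card_le_card (Finset.inter_subset_left : P ∩ φ • P ⊆ P)
    exact ⟨_, _, ⟨h.isSeparation.inter hsmul, Finset.subset_inter h.subset hCφ, by omega,
      hlt hcase.le⟩, Or.inl hcase⟩
  · have hle := Finset.card_union_le P (φ • P)
    rw [Finset.card_smul_finset] at hle
    have hcard : P.card < (P ∪ φ • P).card := Finset.card_lt_card
      ⟨Finset.subset_union_left, fun hP => hφP (Finset.subset_union_right.trans hP)⟩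
    exact ⟨_, _, ⟨h.isSeparation.union hsmul, h.subset.trans Finset.subset_union_left, by omega,
      hlt (by omega)⟩, Or.inr ⟨by omega, hcard⟩⟩

end IsAdmissible

theorem not_isAdmissible (hC : (G.induce (C : Set V)).Preconnected)
    (hint : ∀ φ : G ≃g G, (C ∩ φ • C).Nonempty) : ¬IsAdmissible G C P Q := by
  intro h
  obtain ⟨⟨P, Q⟩, h, hmin⟩ := exists_minimalFor_of_wellFoundedLT
    (fun S : Finset V × Finset V => IsAdmissible G C S.1 S.2)
    (fun S => toLex ((S.1 ∩ S.2).card, Fintype.card V - S.1.card)) ⟨(P, Q), h⟩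
  obtain ⟨P', Q', h', hlt⟩ := h.exists_improvement hC hint
  have hPcard : P'.card ≤ Fintype.card V := Finset.card_le_univ P'
  have hlex : toLex ((P' ∩ Q').card, Fintype.card V - P'.card) <
      toLex ((P ∩ Q).card, Fintype.card V - P.card) := by
    rw [Prod.Lex.toLex_lt_toLex]
    dsimp only at hlt ⊢
    omega
  exact hlex.not_ge (hmin (j := (P', Q')) h' hlex.le)

theorem IsSeparation.card_le (h : IsSeparation G P Q)
    (hC : (G.induce (C : Set V)).Preconnected) (hint : ∀ φ : G ≃g G, (C ∩ φ • C).Nonempty)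
    (hP : C ⊆ P) {φ : G ≃g G} (hQ : φ • C ⊆ Q) :
    Fintype.card V ≤ 8 * (C.card * (P ∩ Q).card) := by
  by_contra! hlt
  have hne : 0 < C.card := Finset.card_pos.2 ((hint 1).mono Finset.inter_subset_left)
  have hle : (P ∩ Q).card ≤ C.card * (P ∩ Q).card := Nat.le_mul_of_pos_left _ hne
  have hcardP := Finset.card_sdiff_add_card_inter P Q
  have hcardQ := Finset.card_sdiff_add_card_inter Q P
  rw [Finset.inter_comm] at hcardQ
  by_cases hlarge : (P ∩ Q).card * C.card < (Q \ P).card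
  · have hsmall := h.card_sdiff_le hC hint hlarge
    rw [mul_comm (P ∩ Q).card] at hsmall
    exact not_isAdmissible hC hint ⟨h, hP, by omega, hlt⟩
  · rw [mul_comm (P ∩ Q).card] at hlarge
    refine not_isAdmissible hC hint (P := φ⁻¹ • Q) (Q := φ⁻¹ • P) ⟨h.symm.smul φ⁻¹, ?_, ?_, ?_⟩
    · rwa [Finset.subset_smul_finset_iff, inv_inv]
    · rw [Finset.card_smul_finset]
      omega
    · rwa [← Finset.smul_finset_inter, Finset.card_smul_finset, Finset.inter_comm]

end Separations

section SeparationOrder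

open scoped Pointwise

variable {V : Type*} {G : SimpleGraph V} {A B P Q S : Finset V} {x y : V}

theorem preconnected_induce_compl_singleton [Finite V] [MulAction.IsPretransitive (G ≃g G) V]
    (hG : G.Connected) (s : V) : (G.induce ({s}ᶜ : Set V)).Preconnected := by
  cases subsingleton_or_nontrivial V with
  | inl _ => exact fun a => (a.2 (Subsingleton.elim _ _)).elim
  | inr _ =>
    obtain ⟨w, hw⟩ := hG.exists_connected_induce_compl_singleton_of_finite_nontrivial
    obtain ⟨φ, rfl⟩ := MulAction.exists_smul_eq (G ≃g G) w s
    rw [← Set.smul_set_singleton, ← Set.smul_set_compl]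
    exact (φ.induce φ.injective.injOn.bijOn_image).preconnected_iff.1 hw.preconnected

variable [Finite V] [DecidableEq V]

theorem IsSeparation.two_le_card_inter [MulAction.IsPretransitive (G ≃g G) V]
    (h : IsSeparation G P Q) (hG : G.Connected) (hx : x ∉ Q) (hy : y ∉ P) :
    2 ≤ (P ∩ Q).card := by
  have hxP := (h.cover x).resolve_right hx
  by_contra! hlt
  have := Fintype.ofFinite V
  suffices hC : ∃ C : Finset V, (G.induce (C : Set V)).Preconnected ∧ P ∩ Q ∩ C = ∅ ∧
      x ∈ C ∧ y ∈ C by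
    obtain ⟨C, hC, hPQ, hxC, hyC⟩ := hC
    exact hy (Finset.mem_sdiff.1 (h.subset_sdiff hC hPQ hxC hxP hyC)).1
  obtain h0 | ⟨s, hs⟩ := (P ∩ Q).eq_empty_or_nonempty
  · refine ⟨Finset.univ, ?_, by rw [h0, Finset.empty_inter], Finset.mem_univ x, Finset.mem_univ y⟩
    rw [Finset.coe_univ]
    exact (induceUnivIso G).preconnected_iff.2 hG.preconnected
  · obtain ⟨hsP, hsQ⟩ := Finset.mem_inter.1 hs
    refine ⟨{s}ᶜ, ?_, ?_, ?_, ?_⟩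
    · rw [Finset.coe_compl, Finset.coe_singleton]
      exact preconnected_induce_compl_singleton hG s
    · rw [← Finset.sdiff_eq_inter_compl, Finset.sdiff_eq_empty_iff_subset]
      exact fun v hv => Finset.mem_singleton.2 (Finset.card_le_one.1 (by omega) v hv s hs)
    · rw [Finset.mem_compl, Finset.mem_singleton]
      rintro rfl
      exact hx hsQ
    · rw [Finset.mem_compl, Finset.mem_singleton]
      rintro rfl
      exact hy hsP

theorem Separates.exists_isSeparation (h : Separates {e | G.Adj e.1 e.2} A B S) :
    ∃ P Q, IsSeparation G P Q ∧ A ⊆ P ∧ B ⊆ Q ∧ P ∩ Q = S := by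
  have := Fintype.ofFinite V
  classical
  let R : Finset V := {v | ∃ l, IsConnector {e | G.Adj e.1 e.2} A {v} l ∧ ∀ u ∈ l, u ∉ S}
  have hR {v : V} : v ∈ R ↔ ∃ l, IsConnector {e | G.Adj e.1 e.2} A {v} l ∧ ∀ u ∈ l, u ∉ S := by
    simp [R]
  refine ⟨R ∪ S, Rᶜ, ⟨fun v => ?_, fun u v hu hv huv => ?_⟩, fun v hv => ?_, fun v hv => ?_, ?_⟩
  · rw [Finset.mem_union, Finset.mem_compl]
    tauto
  · rw [Finset.mem_compl, not_not] at hu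
    rw [Finset.mem_union, not_or] at hv
    obtain ⟨l, hl, hlS⟩ := hR.1 hu
    obtain ⟨l, w, hw, rfl⟩ := hl.exists_eq_append_singleton
    obtain rfl := Finset.mem_singleton.1 hw
    refine hv.1 (hR.2 ⟨l ++ w :: [v], hl.append (X := {w}) (Y := {w}) (B := {v}) ?_, ?_⟩)
    · exact ⟨by simpa using huv, ⟨w, hw, rfl⟩, v, Finset.mem_singleton_self v, rfl⟩
    · simpa [or_imp, forall_and, hv.2] using hlS
  · by_cases hvS : v ∈ S
    · exact Finset.mem_union_right _ hvS
    · exact Finset.mem_union_left _ (hR.2 ⟨[v], ⟨by simp, ⟨v, hv, rfl⟩, v, by simp, rfl⟩, by simpa⟩)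
  · rw [Finset.mem_compl, hR]
    rintro ⟨l, hl, hlS⟩
    obtain ⟨w, hw, hlast⟩ := hl.getLast_mem
    obtain rfl := Finset.mem_singleton.1 hw
    obtain ⟨u, hu, huS⟩ := h ⟨hl.isChain, hl.head_mem, w, hv, hlast⟩
    exact hlS u hu huS
  · rw [← Finset.sdiff_eq_inter_compl, Finset.union_sdiff_left, Finset.sdiff_eq_self_iff_disjoint,
      Finset.disjoint_left]
    intro v hvS hvR
    obtain ⟨l, hl, hlS⟩ := hR.1 hvR
    obtain ⟨l, w, hw, rfl⟩ := hl.exists_eq_append_singleton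
    exact hlS w (by simp) (Finset.mem_singleton.1 hw ▸ hvS)

end SeparationOrder

section LongestCycle

open scoped Pointwise

variable {V : Type*} {G : SimpleGraph V} {ℓ : ℕ} {f : ℤ → V} {A : Finset V}

theorem exists_isCycle [Fintype V] [MulAction.IsPretransitive (G ≃g G) V] (hG : G.Connected)
    (hV : 3 ≤ Fintype.card V) : ∃ (v : V) (p : G.Walk v v), p.IsCycle := by
  classical
  by_contra! hc
  have hT : G.IsTree := ⟨hG, fun _ p => hc _ p⟩
  have : Nontrivial V := Fintype.one_lt_card_iff_nontrivial.1 (by omega)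
  obtain ⟨v, hv⟩ := hT.exists_vert_degree_one_of_nontrivial
  have hdeg (u : V) : G.degree u = 1 := by
    obtain ⟨φ, rfl⟩ := MulAction.exists_smul_eq (G ≃g G) v u
    rw [← hv]
    exact φ.degree_eq v
  have hsum := G.sum_degrees_eq_twice_card_edges
  have hedges := hT.card_edgeFinset
  simp only [hdeg, Finset.sum_const, Finset.card_univ, smul_eq_mul] at hsum
  omega

theorem exists_isCycle_cycleLengthLE [Finite V] {v : V} {p : G.Walk v v} (hp : p.IsCycle) :
    ∃ (v : V) (p : G.Walk v v), p.IsCycle ∧ CycleLengthLE G p.length := by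
  have := Fintype.ofFinite V
  let lengths : Set ℕ := {ℓ | ∃ (v : V) (p : G.Walk v v), p.IsCycle ∧ p.length = ℓ}
  have hbdd : BddAbove lengths := by
    refine ⟨Fintype.card V, ?_⟩
    rintro _ ⟨v, p, hp, rfl⟩
    have := hp.isPath_tail.length_lt
    have := p.length_tail_add_one hp.not_nil
    omega
  obtain ⟨w, q, hq, hlen⟩ := Nat.sSup_mem (s := lengths) ⟨p.length, v, p, hp, rfl⟩ hbdd
  exact ⟨w, q, hq, fun u r hr => hlen ▸ le_csSup hbdd ⟨u, r, hr, rfl⟩⟩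

theorem exists_isCycleParam {v : V} {p : G.Walk v v} (hp : p.IsCycle) :
    ∃ f, IsCycleParam G p.length f ∧ Set.range f = {u | u ∈ p.support} := by
  have h3 := hp.three_le_length
  let f (a : ℤ) : V := p.getVert (a % p.length).toNat
  have hmod (a : ℤ) : ∃ n < p.length, a % p.length = n := by
    obtain ⟨n, hn⟩ := Int.eq_ofNat_of_zero_le (Int.emod_nonneg a (b := p.length) (by omega))
    exact ⟨n, by have := Int.emod_lt_of_pos a (b := p.length) (by omega); omega, hn⟩
  have hf {a : ℤ} {n : ℕ} (ha : a % p.length = n % p.length) (hn : n ≤ p.length) :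
      f a = p.getVert n := by
    simp only [f, ha]
    obtain rfl | hn := hn.eq_or_lt
    · simp
    · norm_cast
      rw [Nat.mod_eq_of_lt hn]
  refine ⟨f, ⟨h3, fun a => ?_, fun a => ?_, fun a b hab hlt => ?_⟩, ?_⟩
  · simp [f]
  · obtain ⟨n, hn, ha⟩ := hmod a
    rw [hf (n := n) (by rw [← ha, Int.emod_emod]) hn.le,
      hf (n := n + 1) (by push_cast; rw [← ha, Int.emod_add_emod]) hn]
    exact p.adj_getVert_succ hn
  · obtain ⟨m, hm, ha⟩ := hmod a
    obtain ⟨n, hn, hb⟩ := hmod b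
    simp only [f, ha, hb, Int.toNat_natCast] at hab
    have hmn : m = n := hp.getVert_injOn' (by simp only [Set.mem_ofPred_eq]; omega)
      (by simp only [Set.mem_ofPred_eq]; omega) hab
    have hdvd : (p.length : ℤ) ∣ a - b := Int.ModEq.dvd (by rw [Int.ModEq, ha, hb, hmn])
    exact sub_eq_zero.1 (Int.eq_zero_of_abs_lt_dvd hdvd (by rwa [Int.abs_eq_natAbs, Nat.cast_lt]))
  · ext u
    rw [Set.mem_ofPred_eq, Walk.mem_support_iff_exists_getVert]
    constructor
    · rintro ⟨a, rfl⟩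
      obtain ⟨n, hn, ha⟩ := hmod a
      exact ⟨n, (hf (by rw [← ha, Int.emod_emod]) hn.le).symm, hn.le⟩
    · rintro ⟨n, rfl, hn⟩
      exact ⟨n, hf rfl hn⟩

theorem IsCycleParam.card_eq (hf : IsCycleParam G ℓ f) (hA : (A : Set V) = Set.range f) :
    A.card = ℓ := by
  have hcard : A.card = (Finset.Ico 0 (ℓ : ℤ)).card := by
    refine (Finset.card_nbij f (fun a _ => ?_) (fun a ha b hb hab => ?_) fun v hv => ?_).symm
    · exact hA ▸ Set.mem_range_self a
    · simp only [Finset.coe_Ico, Set.mem_Ico] at ha hb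
      exact hf.eq_of_map_eq hab (by omega)
    · rw [Finset.coe_Ico]
      exact hf.exists_mem_Ico (hA ▸ hv)
  rw [hcard, Int.card_Ico, sub_zero, Int.toNat_natCast]

theorem IsCycleParam.smul (hf : IsCycleParam G ℓ f) (φ : G ≃g G) :
    IsCycleParam G ℓ fun a => φ • f a :=
  ⟨hf.three_le, hf.periodic.comp _, fun a => φ.map_adj_iff.2 (hf.adj a),
    fun _ _ hab => hf.eq_of_map_eq (φ.injective hab)⟩

variable [DecidableEq V] [Finite V]

theorem IsCycleParam.exists_isSeparation (hf : IsCycleParam G ℓ f) (hG : CycleLengthLE G ℓ)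
    (hA : (A : Set V) = Set.range f) (φ : G ≃g G) :
    ∃ (P Q : Finset V) (m : ℕ), IsSeparation G P Q ∧ A ⊆ P ∧ φ • A ⊆ Q ∧
      (P ∩ Q).card ≤ m + (A ∩ φ • A).card ∧ m ^ 5 < 2 ^ 25 * ((A ∩ φ • A).card + 1) ^ 8 ∧
      ((A ∩ φ • A).card = 0 → m ≤ 1) := by
  have hφA : ((φ • A : Finset V) : Set V) = Set.range fun a => φ • f a := by
    rw [Finset.coe_smul_finset, hA, Set.smul_set_range]
  obtain ⟨S, m, hS, hm⟩ := exists_separates_card_le_add hf (hf.smul φ) hG hA hφA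
  obtain ⟨P, Q, hPQ, hP, hQ, rfl⟩ := hS.exists_isSeparation
  exact ⟨P, Q, m, hPQ, hP, hQ, hm⟩

theorem IsCycleParam.inter_smul_nonempty [MulAction.IsPretransitive (G ≃g G) V]
    (hf : IsCycleParam G ℓ f) (hconn : G.Connected) (hG : CycleLengthLE G ℓ)
    (hA : (A : Set V) = Set.range f) (φ : G ≃g G) : (A ∩ φ • A).Nonempty := by
  have h3 := hf.three_le
  have hcard := hf.card_eq hA
  rw [Finset.nonempty_iff_ne_empty, ne_eq, ← Finset.card_eq_zero]
  intro h0
  obtain ⟨P, Q, m, h, hP, hQ, hPQ, -, hm⟩ := hf.exists_isSeparation hG hA φ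
  have hlt : (P ∩ Q).card < A.card := by
    have := hm h0
    omega
  obtain ⟨x, hx, hxPQ⟩ := Finset.exists_mem_notMem_of_card_lt_card hlt
  obtain ⟨y, hy, hyPQ⟩ := Finset.exists_mem_notMem_of_card_lt_card
    (hlt.trans_eq (Finset.card_smul_finset φ A).symm)
  have := h.two_le_card_inter hconn (fun hxQ => hxPQ (Finset.mem_inter.2 ⟨hP hx, hxQ⟩))
    fun hyP => hyPQ (Finset.mem_inter.2 ⟨hyP, hQ hy⟩)
  have := hm h0
  omega

end LongestCycle

theorem pow_thirteen_le {n ℓ k t m : ℕ} (hk : 1 ≤ k) (hn : n ≤ 8 * (ℓ * t)) (hnk : n * k ≤ ℓ * ℓ)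
    (hm : m ^ 5 < 2 ^ 25 * (k + 1) ^ 8) (ht : t ≤ m + k) : n ^ 13 ≤ 2 ^ 53 * ℓ ^ 21 := by
  have hm' : m ^ 5 ≤ 2 ^ 33 * k ^ 8 := calc
    m ^ 5 ≤ 2 ^ 25 * (k + 1) ^ 8 := hm.le
    _ ≤ 2 ^ 25 * (2 * k) ^ 8 := by gcongr; omega
    _ = 2 ^ 33 * k ^ 8 := by ring
  have hk' : k ^ 5 ≤ 2 ^ 33 * k ^ 8 := calc
    k ^ 5 ≤ k ^ 8 := Nat.pow_le_pow_right hk (by norm_num)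
    _ ≤ 2 ^ 33 * k ^ 8 := Nat.le_mul_of_pos_left _ (by norm_num)
  have ht' : t ^ 5 ≤ 2 ^ 38 * k ^ 8 := calc
    t ^ 5 ≤ (m + k) ^ 5 := by gcongr
    _ ≤ 2 ^ 4 * (m ^ 5 + k ^ 5) := add_pow_le m.zero_le k.zero_le 5
    _ ≤ 2 ^ 4 * (2 ^ 33 * k ^ 8 + 2 ^ 33 * k ^ 8) := by gcongr
    _ = 2 ^ 38 * k ^ 8 := by ring
  calc n ^ 13 = n ^ 5 * n ^ 8 := by ring
    _ ≤ (8 * (ℓ * t)) ^ 5 * n ^ 8 := by gcongr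
    _ = 2 ^ 15 * ℓ ^ 5 * n ^ 8 * t ^ 5 := by ring
    _ ≤ 2 ^ 15 * ℓ ^ 5 * n ^ 8 * (2 ^ 38 * k ^ 8) := by gcongr
    _ = 2 ^ 53 * ℓ ^ 5 * (n * k) ^ 8 := by ring
    _ ≤ 2 ^ 53 * ℓ ^ 5 * (ℓ * ℓ) ^ 8 := by gcongr
    _ = 2 ^ 53 * ℓ ^ 21 := by ring

theorem rpow_thirteen_div_le {n ℓ : ℕ} (h : n ^ 13 ≤ 2 ^ 53 * ℓ ^ 21) :
    1 / 8 * (n : ℝ) ^ ((13 : ℝ) / 21) ≤ ℓ := by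
  have h' : (n : ℝ) ^ 13 ≤ 2 ^ 53 * (ℓ : ℝ) ^ 21 := by exact_mod_cast h
  refine le_of_pow_le_pow_left₀ (n := 21) (by norm_num) (by positivity) ?_
  calc (1 / 8 * (n : ℝ) ^ ((13 : ℝ) / 21)) ^ 21 = 1 / 2 ^ 63 * (n : ℝ) ^ 13 := by
        rw [mul_pow, ← Real.rpow_mul_natCast (by positivity)]
        norm_num
    _ ≤ 1 / 2 ^ 63 * (2 ^ 53 * (ℓ : ℝ) ^ 21) := by gcongr
    _ ≤ (ℓ : ℝ) ^ 21 := by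
        have : (0 : ℝ) ≤ (ℓ : ℝ) ^ 21 := by positivity
        linarith

end LongCycle

open scoped Pointwise

open LongCycle

theorem long_cycle_in_vertex_transitive_general {V : Type*} [Fintype V] (G : SimpleGraph V)
    (hG : G.Connected) (hT : ∀ u v : V, ∃ φ : G ≃g G, φ u = v) (hV : 3 ≤ Fintype.card V) :
    ∃ (v : V) (p : G.Walk v v), p.IsCycle ∧
      1 / 8 * (Fintype.card V : ℝ) ^ ((13 : ℝ) / 21) ≤ (p.length : ℝ) := by
  classical
  have : MulAction.IsPretransitive (G ≃g G) V := ⟨hT⟩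
  have := DFunLike.finite (G ≃g G)
  obtain ⟨_, _, h⟩ := exists_isCycle hG hV
  obtain ⟨v, p, hp, hmax⟩ := exists_isCycle_cycleLengthLE h
  obtain ⟨f, hf, hrange⟩ := exists_isCycleParam hp
  let C := p.support.toFinset
  have hC : (C : Set V) = Set.range f := by rw [List.coe_toFinset, hrange]
  have hconn : (G.induce (C : Set V)).Preconnected := by
    rw [List.coe_toFinset]
    exact p.connected_induce_support.preconnected
  have hint (φ : G ≃g G) := hf.inter_smul_nonempty hG hmax hC φ
  obtain ⟨φ, hφ⟩ := exists_card_mul_card_inter_smul_le (G ≃g G) C C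
  obtain ⟨P, Q, m, hPQ, hP, hQ, hcard, hm, -⟩ := hf.exists_isSeparation hmax hC φ
  have hlarge := hPQ.card_le hconn hint hP hQ
  rw [hf.card_eq hC] at hφ hlarge
  exact ⟨v, p, hp, rpow_thirteen_div_le
    (pow_thirteen_le (Finset.card_pos.2 (hint φ)) hlarge hφ hm hcard)⟩

theorem long_cycle_in_vertex_transitive :
    ∃ c : ℝ, 0 < c ∧
      ∀ (V : Type) [Fintype V] (G : SimpleGraph V),
        G.Connected →
        (∀ u v : V, ∃ φ : G ≃g G, φ u = v) →
        3 ≤ Fintype.card V →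
        ∃ (v : V) (p : G.Walk v v), p.IsCycle ∧
          c * (Fintype.card V : ℝ) ^ ((13 : ℝ) / 21) ≤ (p.length : ℝ) :=
  ⟨1 / 8, by norm_num, fun _ _ => long_cycle_in_vertex_transitive_general⟩
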